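/- arXiv:2101.00868 — 10 statements merged into one kernel-verified Lean document; each statement's English description precedes it below -/
import Mathlib

section
/- Let q ≥ 2 and π be a permutation of {0,…,q−1}. For every x ∈ [0,1), the forward orbit of x under the rotated odometer F_π is either periodic or accumulates at 0; that is, either there exists n ≥ 1 with F_π^n(x) = x, or for every ε > 0 there exists n ≥ 1 with F_π^n(x) < ε. -/
open Classical in
/-- The von Neumann–Kakutani map `a : [0,1) → [0,1)`:
for `x ∈ [1 - 2^{1-n}, 1 - 2^{-n})`, `n ≥ 1`, `a x = x - 1 + 2^{1-n} + 2^{-n} = x - 1 + 3·2^{-n}`.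
Here `Nat.find h` is the least `n` with `x < 1 - 2^{-n}`, which for `x ∈ [0,1)` is exactly
the unique `n ≥ 1` with `1 - 2^{1-n} ≤ x < 1 - 2^{-n}`. -/
noncomputable def vnk (x : ℝ) : ℝ :=
  if h : ∃ n : ℕ, x < 1 - (2 : ℝ)⁻¹ ^ n then
    x - 1 + 3 * (2 : ℝ)⁻¹ ^ (Nat.find h)
  else 0

open Classical in
/-- The finite interval exchange `R_π : [0,1) → [0,1)` determined by a permutation `π` of
`{0,…,q-1}`: `R_π x = x + (π i - i)/q` for `x ∈ [i/q, (i+1)/q)`. -/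
noncomputable def rotPerm (q : ℕ) (π : Equiv.Perm (Fin q)) (x : ℝ) : ℝ :=
  if h : ∃ i : Fin q, x ∈ Set.Ico (((i : ℕ) : ℝ) / q) ((((i : ℕ) : ℝ) + 1) / q) then
    x + ((((π h.choose : Fin q) : ℕ) : ℝ) - (((h.choose : Fin q) : ℕ) : ℝ)) / q
  else x

/-- The rotated odometer `F_π = a ∘ R_π`. -/
noncomputable def rotOdo (q : ℕ) (π : Equiv.Perm (Fin q)) (x : ℝ) : ℝ :=
  vnk (rotPerm q π x)

theorem vnk_spec (y : ℝ) (hy : y ∈ Set.Ico (0 : ℝ) 1) :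
    ∃ n : ℕ, 1 - 2 * (2 : ℝ)⁻¹ ^ n ≤ y ∧ y < 1 - (2 : ℝ)⁻¹ ^ n ∧
      vnk y = y - 1 + 3 * (2 : ℝ)⁻¹ ^ n := by
  classical
  have h : ∃ n : ℕ, y < 1 - (2 : ℝ)⁻¹ ^ n := by
    obtain ⟨n, hn⟩ := exists_pow_lt_of_lt_one (sub_pos.2 hy.2) (show (2 : ℝ)⁻¹ < 1 by norm_num)
    exact ⟨n, by linarith⟩
  refine ⟨Nat.find h, ?_, Nat.find_spec h, ?_⟩
  · rcases hk : Nat.find h with _ | k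
    · have := hy.1
      norm_num
      linarith
    · have := Nat.find_min h (m := k) (by omega)
      rw [pow_succ]
      linarith
  · unfold vnk
    rw [dif_pos h]

theorem rotPerm_spec (q : ℕ) (hq : 2 ≤ q) (π : Equiv.Perm (Fin q)) (x : ℝ)
    (hx : x ∈ Set.Ico (0 : ℝ) 1) :
    ∃ i : Fin q, ((i : ℕ) : ℝ) ≤ x * q ∧ x * q < ((i : ℕ) : ℝ) + 1 ∧
      rotPerm q π x * q = x * q + (((π i : Fin q) : ℕ) : ℝ) - ((i : ℕ) : ℝ) := by
  have hq0 : (0 : ℝ) < q := by exact_mod_cast (by omega : 0 < q)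
  have h : ∃ i : Fin q, x ∈ Set.Ico (((i : ℕ) : ℝ) / q) ((((i : ℕ) : ℝ) + 1) / q) := by
    have h0 : 0 ≤ x * q := mul_nonneg hx.1 hq0.le
    refine ⟨⟨⌊x * q⌋₊, ?_⟩, ?_, ?_⟩
    · rw [Nat.floor_lt h0]
      nlinarith [hx.2]
    · rw [div_le_iff₀ hq0]
      exact Nat.floor_le h0
    · rw [lt_div_iff₀ hq0]
      exact Nat.lt_floor_add_one _
  have hc := h.choose_spec
  refine ⟨h.choose, (div_le_iff₀ hq0).1 hc.1, (lt_div_iff₀ hq0).1 hc.2, ?_⟩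
  unfold rotPerm
  rw [dif_pos h]
  field_simp
  ring

theorem rotPerm_mem (q : ℕ) (hq : 2 ≤ q) (π : Equiv.Perm (Fin q)) (x : ℝ)
    (hx : x ∈ Set.Ico (0 : ℝ) 1) : rotPerm q π x ∈ Set.Ico (0 : ℝ) 1 := by
  have hq0 : (0 : ℝ) < q := by exact_mod_cast (by omega : 0 < q)
  obtain ⟨i, h1, h2, h3⟩ := rotPerm_spec q hq π x hx
  have h4 : (((π i : Fin q) : ℕ) : ℝ) + 1 ≤ q := by exact_mod_cast (π i).2
  have h5 : (0 : ℝ) ≤ (((π i : Fin q) : ℕ) : ℝ) := Nat.cast_nonneg _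
  constructor
  · by_contra! h
    nlinarith
  · by_contra! h
    nlinarith

theorem vnk_mem (y : ℝ) (hy : y ∈ Set.Ico (0 : ℝ) 1) : vnk y ∈ Set.Ico (0 : ℝ) 1 := by
  obtain ⟨n, h1, h2, h3⟩ := vnk_spec y hy
  have h4 : (0 : ℝ) < (2 : ℝ)⁻¹ ^ n := by positivity
  refine ⟨by linarith, ?_⟩
  rcases n with _ | n
  · norm_num at h2
    linarith [hy.1]
  · have h5 : (2 : ℝ)⁻¹ ^ n ≤ 1 := pow_le_one₀ (by norm_num) (by norm_num)
    rw [pow_succ] at *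
    linarith

theorem rotPerm_inj (q : ℕ) (hq : 2 ≤ q) (π : Equiv.Perm (Fin q)) :
    Set.InjOn (rotPerm q π) (Set.Ico (0 : ℝ) 1) := by
  intro x hx y hy hxy
  have hq0 : (0 : ℝ) < q := by exact_mod_cast (by omega : 0 < q)
  obtain ⟨i, h1, h2, h3⟩ := rotPerm_spec q hq π x hx
  obtain ⟨j, k1, k2, k3⟩ := rotPerm_spec q hq π y hy
  rw [hxy] at h3
  have e1 : ((π i : Fin q) : ℕ) < ((π j : Fin q) : ℕ) + 1 := by
    have : (((π i : Fin q) : ℕ) : ℝ) < (((π j : Fin q) : ℕ) : ℝ) + 1 := by linarith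
    exact_mod_cast this
  have e2 : ((π j : Fin q) : ℕ) < ((π i : Fin q) : ℕ) + 1 := by
    have : (((π j : Fin q) : ℕ) : ℝ) < (((π i : Fin q) : ℕ) : ℝ) + 1 := by linarith
    exact_mod_cast this
  have e3 : π i = π j := Fin.ext (by omega)
  have e4 : i = j := π.injective e3
  subst e4
  exact mul_right_cancel₀ hq0.ne' (by linarith)

theorem vnk_inj : Set.InjOn vnk (Set.Ico (0 : ℝ) 1) := by
  intro x hx y hy hxy
  obtain ⟨n, h1, h2, h3⟩ := vnk_spec x hx
  obtain ⟨m, k1, k2, k3⟩ := vnk_spec y hy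
  have key : ∀ a b : ℕ, a < b → 2 * (2 : ℝ)⁻¹ ^ b ≤ (2 : ℝ)⁻¹ ^ a := by
    intro a b hab
    have : (2 : ℝ)⁻¹ ^ b ≤ (2 : ℝ)⁻¹ ^ (a + 1) :=
      pow_le_pow_of_le_one (by norm_num) (by norm_num) hab
    rw [pow_succ] at this
    linarith
  rcases lt_trichotomy n m with h | h | h
  · have := key _ _ h
    linarith
  · subst h
    linarith
  · have := key _ _ h
    linarith

theorem rotOdo_mapsTo (q : ℕ) (hq : 2 ≤ q) (π : Equiv.Perm (Fin q)) :
    Set.MapsTo (rotOdo q π) (Set.Ico (0 : ℝ) 1) (Set.Ico (0 : ℝ) 1) :=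
  fun x hx => vnk_mem _ (rotPerm_mem q hq π x hx)

theorem rotOdo_inj (q : ℕ) (hq : 2 ≤ q) (π : Equiv.Perm (Fin q)) :
    Set.InjOn (rotOdo q π) (Set.Ico (0 : ℝ) 1) :=
  vnk_inj.comp (rotPerm_inj q hq π) (fun x hx => rotPerm_mem q hq π x hx)

/-- If the image is at least `2 * 2⁻ᴺ`, the map acts as a translation by a multiple of
`1 / (q 2ᴺ)`. -/
theorem rotOdo_step (q : ℕ) (hq : 2 ≤ q) (π : Equiv.Perm (Fin q)) (N : ℕ) (x : ℝ)
    (hx : x ∈ Set.Ico (0 : ℝ) 1) (h : 2 * (2 : ℝ)⁻¹ ^ N ≤ rotOdo q π x) :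
    ∃ k : ℤ, rotOdo q π x * (q * 2 ^ N) = x * (q * 2 ^ N) + k := by
  obtain ⟨n, h1, h2, h3⟩ := vnk_spec _ (rotPerm_mem q hq π x hx)
  obtain ⟨i, g1, g2, g3⟩ := rotPerm_spec q hq π x hx
  have hn : n ≤ N := by
    by_contra! hc
    have := pow_le_pow_of_le_one (show (0 : ℝ) ≤ 2⁻¹ by norm_num) (by norm_num) hc.le
    unfold rotOdo at h
    linarith
  obtain ⟨d, rfl⟩ := Nat.exists_eq_add_of_le hn
  have e : (2 : ℝ)⁻¹ ^ n * 2 ^ (n + d) = 2 ^ d := by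
    rw [pow_add, ← mul_assoc, ← mul_pow]
    norm_num
  refine ⟨(((π i : Fin q) : ℕ) - ((i : ℕ) : ℤ) - q) * 2 ^ (n + d) + 3 * q * 2 ^ d, ?_⟩
  unfold rotOdo
  rw [h3]
  push_cast
  linear_combination (2 : ℝ) ^ (n + d) * g3 + 3 * (q : ℝ) * e

/-- every forward orbit of the rotated odometer is either periodic or
accumulates at `0`. -/
theorem rotOdo_orbit_periodic_or_accumulates_at_zero (q : ℕ) (hq : 2 ≤ q)
    (π : Equiv.Perm (Fin q)) (x : ℝ) (hx : x ∈ Set.Ico (0 : ℝ) 1) :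
    (∃ n : ℕ, 1 ≤ n ∧ (rotOdo q π)^[n] x = x) ∨
    (∀ ε : ℝ, 0 < ε → ∃ n : ℕ, 1 ≤ n ∧ (rotOdo q π)^[n] x < ε) := by
  by_cases H : ∀ ε : ℝ, 0 < ε → ∃ n : ℕ, 1 ≤ n ∧ (rotOdo q π)^[n] x < ε
  · exact Or.inr H
  left
  push Not at H
  obtain ⟨ε, hε, H⟩ := H
  obtain ⟨N, hN⟩ := exists_pow_lt_of_lt_one (half_pos hε) (show (2 : ℝ)⁻¹ < 1 by norm_num)
  have hq0 : (0 : ℝ) < q := by exact_mod_cast (by omega : 0 < q)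
  have hM : (0 : ℝ) < q * 2 ^ N := by positivity
  have hmem : ∀ n, (rotOdo q π)^[n] x ∈ Set.Ico (0 : ℝ) 1 := fun n =>
    (rotOdo_mapsTo q hq π).iterate n hx
  have hk : ∀ n, ∃ k : ℤ, (rotOdo q π)^[n] x * (q * 2 ^ N) = x * (q * 2 ^ N) + k := by
    intro n
    induction n with
    | zero => exact ⟨0, by simp⟩
    | succ n ih =>
      obtain ⟨k, hk⟩ := ih
      have h1 := H (n + 1) (by omega)
      rw [Function.iterate_succ_apply'] at h1 ⊢
      obtain ⟨l, hl⟩ := rotOdo_step q hq π N _ (hmem n) (by linarith)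
      exact ⟨k + l, by rw [hl, hk]; push_cast; ring⟩
  choose k hk using hk
  have hfin : ∀ n, k n ∈ Set.Icc (-((q : ℤ) * 2 ^ N)) ((q : ℤ) * 2 ^ N) := by
    intro n
    have a1 := hmem n
    have a2 := hk n
    have b1 := mul_nonneg a1.1 hM.le
    have b2 := mul_lt_mul_of_pos_right a1.2 hM
    have b3 := mul_nonneg hx.1 hM.le
    have b4 := mul_lt_mul_of_pos_right hx.2 hM
    constructor
    · have : (-((q : ℝ) * 2 ^ N)) ≤ k n := by linarith
      exact_mod_cast this
    · have : (k n : ℝ) ≤ (q : ℝ) * 2 ^ N := by linarith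
      exact_mod_cast this
  obtain ⟨m, -, n, -, hmn, hkmn⟩ := Set.infinite_univ.exists_lt_map_eq_of_mapsTo
    (fun n _ => hfin n) (Set.finite_Icc _ _)
  refine ⟨n - m, by omega, ?_⟩
  have e1 : (rotOdo q π)^[m] x = (rotOdo q π)^[n] x := by
    refine mul_right_cancel₀ hM.ne' ?_
    rw [hk m, hk n, hkmn]
  refine (rotOdo_inj q hq π).iterate (rotOdo_mapsTo q hq π) m (hmem _) hx ?_
  rw [← Function.iterate_add_apply, e1]
  congr 2
  omega
end

section
/- Let q ≥ 2 and π be a permutation of {0,…,q−1}. If x ∈ [0,1) is a periodic point of the rotated odometer F_π with F_π^n(x) = x for some n ≥ 1, then there exists ε > 0 such that every y ∈ [x, x+ε) ∩ [0,1) satisfies F_π^n(y) = y. In particular, the set I_per of periodic points is a union of half-open intervals of the form [u,v). -/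
lemma vnk_local (x : ℝ) (hx : x ∈ Set.Ico (0 : ℝ) 1) :
    vnk x ∈ Set.Ico (0 : ℝ) 1 ∧
      ∃ ε : ℝ, 0 < ε ∧ ∀ y ∈ Set.Ico x (x + ε), vnk y = vnk x + (y - x) := by
  classical
  have h : ∃ n : ℕ, x < 1 - (2 : ℝ)⁻¹ ^ n := by
    obtain ⟨n, hn⟩ := exists_pow_lt_of_lt_one (sub_pos.2 hx.2) (show (2 : ℝ)⁻¹ < 1 by norm_num)
    exact ⟨n, by linarith⟩
  obtain ⟨n, hn⟩ : ∃ n, n = Nat.find h := ⟨_, rfl⟩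
  have hs : x < 1 - (2 : ℝ)⁻¹ ^ n := by rw [hn]; exact Nat.find_spec h
  have hm : ∀ m < n, ¬ x < 1 - (2 : ℝ)⁻¹ ^ m := by
    intro m hmn; rw [hn] at hmn; exact Nat.find_min h hmn
  have key : ∀ y, x ≤ y → y < 1 - (2 : ℝ)⁻¹ ^ n → vnk y = y - 1 + 3 * (2 : ℝ)⁻¹ ^ n := by
    intro y hxy hy
    have h' : ∃ n : ℕ, y < 1 - (2 : ℝ)⁻¹ ^ n := ⟨n, hy⟩
    have : Nat.find h' = n := by
      rw [Nat.find_eq_iff]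
      refine ⟨hy, fun m hmn hlt => hm m hmn (lt_of_le_of_lt hxy hlt)⟩
    unfold vnk
    rw [dif_pos h']
    convert rfl using 4
    exact this.symm
  have hvx := key x le_rfl hs
  refine ⟨?_, 1 - (2 : ℝ)⁻¹ ^ n - x, by linarith, ?_⟩
  · rw [hvx]
    cases n with
    | zero => have := hx.1; norm_num at hs; linarith
    | succ k =>
      have h1 := hm k (Nat.lt_succ_self k)
      have h2 : (2 : ℝ)⁻¹ ^ k ≤ 1 := pow_le_one₀ (by norm_num) (by norm_num)
      have h3 : (0 : ℝ) < (2 : ℝ)⁻¹ ^ k := by positivity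
      rw [pow_succ] at hs ⊢
      constructor <;> linarith
  · intro y hy
    rw [key y hy.1 (by linarith [hy.2]), hvx]; ring

lemma rotPerm_local (q : ℕ) (hq : 2 ≤ q) (π : Equiv.Perm (Fin q)) (x : ℝ)
    (hx : x ∈ Set.Ico (0 : ℝ) 1) :
    rotPerm q π x ∈ Set.Ico (0 : ℝ) 1 ∧
      ∃ ε : ℝ, 0 < ε ∧ ∀ y ∈ Set.Ico x (x + ε), rotPerm q π y = rotPerm q π x + (y - x) := by
  have hq0 : (0 : ℝ) < q := by exact_mod_cast (by omega : 0 < q)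
  have hx0 : 0 ≤ x * q := mul_nonneg hx.1 hq0.le
  have hfl : ⌊x * q⌋₊ < q := by
    rw [Nat.floor_lt hx0]; nlinarith [hx.2]
  obtain ⟨i, hi⟩ : ∃ i : Fin q, (i : ℕ) = ⌊x * q⌋₊ := ⟨⟨_, hfl⟩, rfl⟩
  have hi1 : ((i : ℕ) : ℝ) / q ≤ x := by
    rw [div_le_iff₀ hq0, hi]; exact Nat.floor_le hx0
  have hi2 : x < (((i : ℕ) : ℝ) + 1) / q := by
    rw [lt_div_iff₀ hq0, hi]; exact Nat.lt_floor_add_one _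
  have key : ∀ y ∈ Set.Ico (((i : ℕ) : ℝ) / q) ((((i : ℕ) : ℝ) + 1) / q),
      rotPerm q π y = y + ((((π i : Fin q) : ℕ) : ℝ) - ((i : ℕ) : ℝ)) / q := by
    intro y hy
    have h : ∃ i : Fin q, y ∈ Set.Ico (((i : ℕ) : ℝ) / q) ((((i : ℕ) : ℝ) + 1) / q) := ⟨i, hy⟩
    have hc : h.choose = i := by
      have hs := h.choose_spec
      generalize h.choose = j at hs
      have a1 := (div_lt_div_iff_of_pos_right hq0).1 (lt_of_le_of_lt hs.1 hy.2)
      have a2 := (div_lt_div_iff_of_pos_right hq0).1 (lt_of_le_of_lt hy.1 hs.2)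
      have b1 : (j : ℕ) < (i : ℕ) + 1 := by exact_mod_cast a1
      have b2 : (i : ℕ) < (j : ℕ) + 1 := by exact_mod_cast a2
      exact Fin.ext (by omega)
    unfold rotPerm
    rw [dif_pos h, hc]
  have hvx := key x ⟨hi1, hi2⟩
  refine ⟨?_, (((i : ℕ) : ℝ) + 1) / q - x, by linarith, ?_⟩
  · rw [hvx]
    have h1 : (((π i : Fin q) : ℕ) : ℝ) + 1 ≤ q := by exact_mod_cast (π i).2
    have h2 : (0 : ℝ) ≤ (((π i : Fin q) : ℕ) : ℝ) / q := by positivity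
    have h3 : ((((π i : Fin q) : ℕ) : ℝ) + 1) / q ≤ 1 := by rwa [div_le_one hq0]
    rw [add_div] at h3 hi2
    rw [sub_div]
    constructor <;> linarith
  · intro y hy
    rw [key y ⟨hi1.trans hy.1, by linarith [hy.2]⟩, hvx]; ring

lemma comp_local (f g : ℝ → ℝ) (x : ℝ)
    (hf : ∃ ε : ℝ, 0 < ε ∧ ∀ y ∈ Set.Ico x (x + ε), f y = f x + (y - x))
    (hg : ∃ ε : ℝ, 0 < ε ∧ ∀ y ∈ Set.Ico (f x) (f x + ε), g y = g (f x) + (y - f x)) :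
    ∃ ε : ℝ, 0 < ε ∧ ∀ y ∈ Set.Ico x (x + ε), g (f y) = g (f x) + (y - x) := by
  obtain ⟨e, he, hf⟩ := hf
  obtain ⟨d, hd, hg⟩ := hg
  refine ⟨min e d, lt_min he hd, fun y hy => ?_⟩
  have h1 := hy.1
  have h2 := hy.2
  have h3 := min_le_left e d
  have h4 := min_le_right e d
  have hfy := hf y ⟨h1, by linarith⟩
  rw [hg (f y) ⟨by linarith, by linarith⟩, hfy]; ring

lemma rotOdo_iter_local (q : ℕ) (hq : 2 ≤ q) (π : Equiv.Perm (Fin q)) (x : ℝ)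
    (hx : x ∈ Set.Ico (0 : ℝ) 1) (n : ℕ) :
    (rotOdo q π)^[n] x ∈ Set.Ico (0 : ℝ) 1 ∧
      ∃ ε : ℝ, 0 < ε ∧ ∀ y ∈ Set.Ico x (x + ε),
        (rotOdo q π)^[n] y = (rotOdo q π)^[n] x + (y - x) := by
  induction n with
  | zero => exact ⟨hx, 1, one_pos, fun y _ => by simp⟩
  | succ n ih =>
    obtain ⟨ih1, ih2⟩ := ih
    obtain ⟨r1, r2⟩ := rotPerm_local q hq π _ ih1
    obtain ⟨v1, v2⟩ := vnk_local _ r1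
    simp only [Function.iterate_succ_apply']
    exact ⟨v1, comp_local _ (rotOdo q π) x ih2 (comp_local _ vnk _ r2 v2)⟩

/-- around each periodic point of `F_π` there is a right half-open interval of
points periodic with the same period; hence `I_per` is a union of half-open intervals `[u,v)`. -/
theorem rotOdo_periodic_point_has_halfopen_interval (q : ℕ) (hq : 2 ≤ q)
    (π : Equiv.Perm (Fin q)) (x : ℝ) (hx : x ∈ Set.Ico (0 : ℝ) 1) (n : ℕ) (hn : 1 ≤ n)
    (hper : (rotOdo q π)^[n] x = x) :
    ∃ ε : ℝ, 0 < ε ∧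
      ∀ y ∈ Set.Ico x (x + ε) ∩ Set.Ico (0 : ℝ) 1, (rotOdo q π)^[n] y = y := by
  obtain ⟨_, ε, hε, h⟩ := rotOdo_iter_local q hq π x hx n
  refine ⟨ε, hε, fun y hy => ?_⟩
  rw [h y hy.1, hper]; ring
end

section
/- Let q ≥ 2 and π be a permutation of {0,…,q−1}, and let D = {x ∈ [0,1) : x = F_π^k(d) for some d ∈ D₀ and k ≥ 0, or F_π^k(x) ∈ D₀ for some k ≥ 0} be the union of the forward and backward F_π-orbits of the discontinuity set D₀. Then D is dense in the set I_np of non-periodic points: for all real numbers u < v, if the open interval (u,v) meets I_np, then (u,v) contains a point of D. -/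
/-- The set of periodic points of the rotated odometer in `[0,1)`. -/
noncomputable def Iper (q : ℕ) (π : Equiv.Perm (Fin q)) : Set ℝ :=
  {x ∈ Set.Ico (0 : ℝ) 1 | ∃ n : ℕ, 1 ≤ n ∧ (rotOdo q π)^[n] x = x}

/-- The set of non-periodic points of the rotated odometer in `[0,1)`. -/
noncomputable def Inp (q : ℕ) (π : Equiv.Perm (Fin q)) : Set ℝ :=
  Set.Ico (0 : ℝ) 1 \ Iper q π

/-- The set `D₀ = {R_π⁻¹(1 - 2^{-n}) : n ≥ 0}` of discontinuity points of `F_π`. -/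
noncomputable def D0set (q : ℕ) (π : Equiv.Perm (Fin q)) : Set ℝ :=
  {x ∈ Set.Ico (0 : ℝ) 1 | ∃ n : ℕ, rotPerm q π x = 1 - (2 : ℝ)⁻¹ ^ n}

/-- The union `D` of the forward and backward `F_π`-orbits of `D₀`. -/
noncomputable def Dset (q : ℕ) (π : Equiv.Perm (Fin q)) : Set ℝ :=
  {x ∈ Set.Ico (0 : ℝ) 1 |
    (∃ d ∈ D0set q π, ∃ k : ℕ, x = (rotOdo q π)^[k] d) ∨
    (∃ k : ℕ, (rotOdo q π)^[k] x ∈ D0set q π)}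

open Filter Topology in
lemma exists_delta (q : ℕ) (D : Set ℝ) (e : ℝ) (he : 0 < e) :
    ∃ r : ℝ, 0 < r ∧ r < e ∧ ∀ i ∈ Finset.range (q+1), ∀ s t : ℝ, s < (i:ℝ)/q → (i:ℝ)/q < t →
      (∀ z ∈ Set.Ico s t, z ∉ D) → ∀ z ∈ Set.Ico ((i:ℝ)/q - r) ((i:ℝ)/q + r), z ∉ D := by
  have h1 : ∀ᶠ r : ℝ in 𝓝[>] 0, ∀ i ∈ Finset.range (q+1), ∀ s t : ℝ, s < (i:ℝ)/q → (i:ℝ)/q < t →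
      (∀ z ∈ Set.Ico s t, z ∉ D) → ∀ z ∈ Set.Ico ((i:ℝ)/q - r) ((i:ℝ)/q + r), z ∉ D := by
    rw [Filter.eventually_all_finset]
    intro i _
    by_cases h : ∃ s t : ℝ, s < (i:ℝ)/q ∧ (i:ℝ)/q < t ∧ (∀ z ∈ Set.Ico s t, z ∉ D)
    · obtain ⟨s, t, hs, ht, hz⟩ := h
      have h2 : Set.Ioo (0:ℝ) (min ((i:ℝ)/q - s) (t - (i:ℝ)/q)) ∈ 𝓝[>] (0:ℝ) :=
        Ioo_mem_nhdsGT (lt_min (by linarith) (by linarith))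
      filter_upwards [h2] with r hr
      intro _ _ _ _ _ z hzz
      have a1 := min_le_left ((i:ℝ)/q - s) (t - (i:ℝ)/q)
      have a2 := min_le_right ((i:ℝ)/q - s) (t - (i:ℝ)/q)
      have := hr.2
      exact hz z ⟨by linarith [hzz.1], by linarith [hzz.2]⟩
    · refine Filter.Eventually.of_forall fun r s t hs ht hz => absurd ⟨s, t, hs, ht, hz⟩ h
  have h2 : Set.Ioo (0:ℝ) e ∈ 𝓝[>] (0:ℝ) := Ioo_mem_nhdsGT he
  obtain ⟨r, hr, hr2⟩ := (h1.and h2).exists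
  exact ⟨r, hr2.1, hr2.2, hr⟩

lemma half_pow_anti {m n : ℕ} (h : m ≤ n) : (2:ℝ)⁻¹ ^ n ≤ (2:ℝ)⁻¹ ^ m :=
  pow_le_pow_of_le_one (by norm_num) (by norm_num) h

lemma vnk_exists (z : ℝ) (h0 : 0 ≤ z) (h1 : z < 1) :
    ∃ n : ℕ, 1 - 2 * (2:ℝ)⁻¹ ^ n ≤ z ∧ z < 1 - (2:ℝ)⁻¹ ^ n ∧ 1 ≤ n := by
  classical
  have h : ∃ n : ℕ, z < 1 - (2:ℝ)⁻¹ ^ n := by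
    obtain ⟨n, hn⟩ := exists_pow_lt_of_lt_one (show (0:ℝ) < 1 - z by linarith)
      (show (2:ℝ)⁻¹ < 1 by norm_num)
    exact ⟨n, by linarith⟩
  refine ⟨Nat.find h, ?_, Nat.find_spec h, ?_⟩
  · rcases hn : Nat.find h with _ | m
    · norm_num; linarith
    · have := Nat.find_min h (m := m) (by omega)
      rw [pow_succ]; linarith
  · by_contra hc
    have h2 := Nat.find_spec h
    have h3 : Nat.find h = 0 := by omega
    rw [h3] at h2
    norm_num at h2; linarith

lemma vnk_eq (z : ℝ) (n : ℕ) (h1 : 1 - 2 * (2:ℝ)⁻¹ ^ n ≤ z) (h2 : z < 1 - (2:ℝ)⁻¹ ^ n) :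
    vnk z = z - 1 + 3 * (2:ℝ)⁻¹ ^ n := by
  classical
  have h : ∃ n : ℕ, z < 1 - (2:ℝ)⁻¹ ^ n := ⟨n, h2⟩
  have hf : Nat.find h = n := by
    rw [Nat.find_eq_iff]
    refine ⟨h2, fun m hm hc => ?_⟩
    have := half_pow_anti (show m + 1 ≤ n from hm)
    rw [pow_succ] at this
    linarith
  unfold vnk
  rw [dif_pos h]
  congr 3

lemma vnk_inj_s6 {z w : ℝ} (hz0 : 0 ≤ z) (hz1 : z < 1) (hw0 : 0 ≤ w) (hw1 : w < 1)
    (h : vnk z = vnk w) : z = w := by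
  obtain ⟨n, a1, a2, -⟩ := vnk_exists z hz0 hz1
  obtain ⟨m, b1, b2, -⟩ := vnk_exists w hw0 hw1
  rw [vnk_eq z n a1 a2, vnk_eq w m b1 b2] at h
  rcases lt_trichotomy n m with hh | hh | hh
  · have := half_pow_anti (show n + 1 ≤ m from hh)
    rw [pow_succ] at this
    linarith
  · subst hh; linarith
  · have := half_pow_anti (show m + 1 ≤ n from hh)
    rw [pow_succ] at this
    linarith

lemma vnk_mem_s6 {z : ℝ} (hz0 : 0 ≤ z) (hz1 : z < 1) : 0 ≤ vnk z ∧ vnk z < 1 := by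
  obtain ⟨n, a1, a2, a3⟩ := vnk_exists z hz0 hz1
  rw [vnk_eq z n a1 a2]
  have := half_pow_anti a3
  have : (0:ℝ) < (2:ℝ)⁻¹ ^ n := by positivity
  norm_num at *
  constructor <;> linarith

lemma cell_exists (q : ℕ) (hq : 2 ≤ q) (x : ℝ) (h0 : 0 ≤ x) (h1 : x < 1) :
    ∃ i : Fin q, ((i:ℕ):ℝ)/q ≤ x ∧ x < (((i:ℕ):ℝ)+1)/q := by
  have hq0 : (0:ℝ) < q := by positivity
  have hlt : ⌊x * q⌋₊ < q := by
    rw [Nat.floor_lt (by positivity)]; nlinarith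
  refine ⟨⟨⌊x * q⌋₊, hlt⟩, ?_, ?_⟩
  · rw [div_le_iff₀ hq0]; exact Nat.floor_le (by positivity)
  · rw [lt_div_iff₀ hq0]; exact Nat.lt_floor_add_one _

lemma cell_unique (q : ℕ) (hq : 2 ≤ q) (x : ℝ) (i j : ℕ) (a1 : (i:ℝ)/q ≤ x) (a2 : x < ((i:ℝ)+1)/q)
    (b1 : (j:ℝ)/q ≤ x) (b2 : x < ((j:ℝ)+1)/q) : i = j := by
  have hq0 : (0:ℝ) < q := by positivity
  rw [div_le_iff₀ hq0] at a1 b1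
  rw [lt_div_iff₀ hq0] at a2 b2
  have h1 : (i:ℝ) < j + 1 := by linarith
  have h2 : (j:ℝ) < i + 1 := by linarith
  norm_cast at h1 h2
  omega

lemma rot_eq (q : ℕ) (hq : 2 ≤ q) (π : Equiv.Perm (Fin q)) (x : ℝ) (i : Fin q)
    (a1 : ((i:ℕ):ℝ)/q ≤ x) (a2 : x < (((i:ℕ):ℝ)+1)/q) :
    rotPerm q π x = x + (((π i : ℕ):ℝ) - ((i:ℕ):ℝ))/q := by
  have h : ∃ i : Fin q, x ∈ Set.Ico (((i : ℕ) : ℝ) / q) ((((i : ℕ) : ℝ) + 1) / q) := ⟨i, a1, a2⟩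
  have hc : h.choose = i := Fin.ext (cell_unique q hq x _ _ h.choose_spec.1 h.choose_spec.2 a1 a2)
  unfold rotPerm
  rw [dif_pos h, hc]

lemma rot_cell (q : ℕ) (hq : 2 ≤ q) (π : Equiv.Perm (Fin q)) (x : ℝ) (i : Fin q)
    (a1 : ((i:ℕ):ℝ)/q ≤ x) (a2 : x < (((i:ℕ):ℝ)+1)/q) :
    ((π i : ℕ):ℝ)/q ≤ rotPerm q π x ∧ rotPerm q π x < (((π i : ℕ):ℝ)+1)/q := by
  rw [rot_eq q hq π x i a1 a2, sub_div]
  rw [add_div] at a2 ⊢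
  constructor <;> linarith

lemma rot_mem (q : ℕ) (hq : 2 ≤ q) (π : Equiv.Perm (Fin q)) (x : ℝ) (h0 : 0 ≤ x) (h1 : x < 1) :
    0 ≤ rotPerm q π x ∧ rotPerm q π x < 1 := by
  have hq0 : (0:ℝ) < q := by positivity
  obtain ⟨i, a1, a2⟩ := cell_exists q hq x h0 h1
  obtain ⟨b1, b2⟩ := rot_cell q hq π x i a1 a2
  refine ⟨le_trans (by positivity) b1, lt_of_lt_of_le b2 ?_⟩
  rw [div_le_one hq0]
  exact_mod_cast (π i).2

lemma rot_inj (q : ℕ) (hq : 2 ≤ q) (π : Equiv.Perm (Fin q)) {x y : ℝ} (h0 : 0 ≤ x) (h1 : x < 1)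
    (g0 : 0 ≤ y) (g1 : y < 1) (h : rotPerm q π x = rotPerm q π y) : x = y := by
  obtain ⟨i, a1, a2⟩ := cell_exists q hq x h0 h1
  obtain ⟨j, b1, b2⟩ := cell_exists q hq y g0 g1
  obtain ⟨c1, c2⟩ := rot_cell q hq π x i a1 a2
  obtain ⟨d1, d2⟩ := rot_cell q hq π y j b1 b2
  rw [← h] at d1 d2
  have hij : i = j := π.injective (Fin.ext (cell_unique q hq _ _ _ c1 c2 d1 d2))
  subst hij
  rw [rot_eq q hq π x i a1 a2, rot_eq q hq π y i b1 b2] at h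
  linarith

lemma odo_mem (q : ℕ) (hq : 2 ≤ q) (π : Equiv.Perm (Fin q)) (x : ℝ) (h : x ∈ Set.Ico (0:ℝ) 1) :
    rotOdo q π x ∈ Set.Ico (0:ℝ) 1 := by
  have := rot_mem q hq π x h.1 h.2
  exact vnk_mem_s6 this.1 this.2

lemma odo_iter_mem (q : ℕ) (hq : 2 ≤ q) (π : Equiv.Perm (Fin q)) (x : ℝ)
    (h : x ∈ Set.Ico (0:ℝ) 1) (k : ℕ) : (rotOdo q π)^[k] x ∈ Set.Ico (0:ℝ) 1 := by
  induction k with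
  | zero => exact h
  | succ k ih => rw [Function.iterate_succ_apply']; exact odo_mem q hq π _ ih

lemma odo_inj (q : ℕ) (hq : 2 ≤ q) (π : Equiv.Perm (Fin q)) {x y : ℝ} (hx : x ∈ Set.Ico (0:ℝ) 1)
    (hy : y ∈ Set.Ico (0:ℝ) 1) (h : rotOdo q π x = rotOdo q π y) : x = y := by
  have a := rot_mem q hq π x hx.1 hx.2
  have b := rot_mem q hq π y hy.1 hy.2
  exact rot_inj q hq π hx.1 hx.2 hy.1 hy.2 (vnk_inj_s6 a.1 a.2 b.1 b.2 h)

lemma odo_cancel (q : ℕ) (hq : 2 ≤ q) (π : Equiv.Perm (Fin q)) {x : ℝ} (hx : x ∈ Set.Ico (0:ℝ) 1)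
    (k m : ℕ) (h : (rotOdo q π)^[m + k] x = (rotOdo q π)^[k] x) : (rotOdo q π)^[m] x = x := by
  induction k with
  | zero => exact h
  | succ k ih =>
    apply ih
    rw [← add_assoc, Function.iterate_succ_apply', Function.iterate_succ_apply'] at h
    exact odo_inj q hq π (odo_iter_mem q hq π x hx _) (odo_iter_mem q hq π x hx _) h

lemma D_back (q : ℕ) (hq : 2 ≤ q) (π : Equiv.Perm (Fin q)) {y : ℝ} (hy : y ∈ Set.Ico (0:ℝ) 1)
    (h : rotOdo q π y ∈ Dset q π) : y ∈ Dset q π := by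
  obtain ⟨-, ⟨d, hd, k, hk⟩ | ⟨k, hk⟩⟩ := h
  · rcases k with _ | k
    · refine ⟨hy, Or.inr ⟨1, ?_⟩⟩
      simp only [Function.iterate_zero, id] at hk
      simpa [hk] using hd
    · rw [Function.iterate_succ_apply'] at hk
      exact ⟨hy, Or.inl ⟨d, hd, k, odo_inj q hq π hy (odo_iter_mem q hq π d hd.1 k) hk⟩⟩
  · exact ⟨hy, Or.inr ⟨k + 1, by rwa [Function.iterate_succ_apply]⟩⟩

/-- `y` lies in a half-open interval of length at least `r` free of points of `D`. -/
def GoodPt (q : ℕ) (π : Equiv.Perm (Fin q)) (r y : ℝ) : Prop :=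
  ∃ s t : ℝ, 0 ≤ s ∧ t ≤ 1 ∧ s ≤ y ∧ y < t ∧ r ≤ t - s ∧ ∀ z ∈ Set.Ico s t, z ∉ Dset q π

lemma good_refine (q : ℕ) (hq : 2 ≤ q) (π : Equiv.Perm (Fin q)) (r y : ℝ) (hr : 0 < r)
    (hrq : r < 1 / q)
    (H : ∀ i ∈ Finset.range (q+1), ∀ s t : ℝ, s < (i:ℝ)/q → (i:ℝ)/q < t →
      (∀ z ∈ Set.Ico s t, z ∉ Dset q π) →
        ∀ z ∈ Set.Ico ((i:ℝ)/q - r) ((i:ℝ)/q + r), z ∉ Dset q π)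
    (hy : GoodPt q π r y) :
    ∃ i : Fin q, ∃ s t : ℝ, ((i:ℕ):ℝ)/q ≤ s ∧ t ≤ (((i:ℕ):ℝ)+1)/q ∧ s ≤ y ∧ y < t ∧ r ≤ t - s ∧
      ∀ z ∈ Set.Ico s t, z ∉ Dset q π := by
  obtain ⟨s, t, hs, ht, hsy, hyt, hl, hz⟩ := hy
  obtain ⟨i, a1, a2⟩ := cell_exists q hq y (by linarith) (by linarith)
  have hi := i.2
  have H1 := H i (by simp) s t
  have H2 := H (i+1) (by simp) s t
  push_cast at H2
  have hc : (((i:ℕ):ℝ)+1)/q = ((i:ℕ):ℝ)/q + 1/q := by rw [add_div]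
  refine ⟨i, ?_⟩
  generalize (((i:ℕ):ℝ)+1)/q = c' at *
  generalize ((i:ℕ):ℝ)/q = c at *
  by_cases h1 : s < c
  · have K1 := H1 h1 (by linarith) hz
    by_cases h2 : t ≤ c'
    · refine ⟨c, max t (c + r), le_rfl, max_le h2 (by linarith), a1, lt_max_of_lt_left hyt, ?_, ?_⟩
      · linarith [le_max_right t (c+r)]
      · rintro z ⟨z1, z2⟩
        rcases lt_max_iff.1 z2 with h | h
        · exact hz z ⟨by linarith, h⟩
        · exact K1 z ⟨by linarith, h⟩
    · refine ⟨c, c', le_rfl, le_rfl, a1, a2, by linarith, ?_⟩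
      rintro z ⟨z1, z2⟩
      exact hz z ⟨by linarith, by linarith⟩
  · by_cases h2 : t ≤ c'
    · exact ⟨s, t, by linarith, h2, hsy, hyt, hl, hz⟩
    · have K2 := H2 (by linarith) (by linarith) hz
      refine ⟨min s (c' - r), c', le_min (by linarith) (by linarith), le_rfl,
        min_le_of_left_le hsy, a2, ?_, ?_⟩
      · linarith [min_le_right s (c' - r)]
      · rintro z ⟨z1, z2⟩
        rcases min_le_iff.1 z1 with h | h
        · exact hz z ⟨h, by linarith⟩
        · exact K2 z ⟨h, by linarith⟩

lemma good_step (q : ℕ) (hq : 2 ≤ q) (π : Equiv.Perm (Fin q)) (r y : ℝ) (hr : 0 < r)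
    (hrq : r < 1 / q) (N : ℕ) (hN : (2:ℝ)⁻¹ ^ N < r)
    (H : ∀ i ∈ Finset.range (q+1), ∀ s t : ℝ, s < (i:ℝ)/q → (i:ℝ)/q < t →
      (∀ z ∈ Set.Ico s t, z ∉ Dset q π) →
        ∀ z ∈ Set.Ico ((i:ℝ)/q - r) ((i:ℝ)/q + r), z ∉ Dset q π)
    (hy : GoodPt q π r y) :
    GoodPt q π r (rotOdo q π y) ∧ ∃ m : ℤ, rotOdo q π y = y + m / (q * 2 ^ N) := by
  have hq0 : (0:ℝ) < q := by positivity
  obtain ⟨i, s, t, c1, c2, hsy, hyt, hl, hz⟩ := good_refine q hq π r y hr hrq H hy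
  have hc0 : 0 ≤ ((i:ℕ):ℝ)/q := by positivity
  have hc1 : (((i:ℕ):ℝ)+1)/q ≤ 1 := by
    rw [div_le_one hq0]; exact_mod_cast i.2
  set α : ℝ := (((π i : ℕ):ℝ) - ((i:ℕ):ℝ))/q with hα
  have hR : ∀ z, s ≤ z → z < t → rotPerm q π z = z + α := fun z h1 h2 =>
    rot_eq q hq π z i (by linarith) (by linarith)
  have hI : ∀ z, s ≤ z → z < t → z ∈ Set.Ico (0:ℝ) 1 := fun z h1 h2 =>
    ⟨by linarith, by linarith⟩
  have hym := rot_mem q hq π y (hI y hsy hyt).1 (hI y hsy hyt).2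
  rw [hR y hsy hyt] at hym
  obtain ⟨n, n1, n2, n3⟩ := vnk_exists _ hym.1 hym.2
  have hno : ∀ k : ℕ, ∀ z, s ≤ z → z < t → z + α ≠ 1 - (2:ℝ)⁻¹ ^ k := by
    intro k z h1 h2 he
    refine hz z ⟨h1, h2⟩ ⟨hI z h1 h2, Or.inr ⟨0, hI z h1 h2, k, ?_⟩⟩
    simpa [hR z h1 h2] using he
  obtain ⟨k, rfl⟩ : ∃ k, n = k + 1 := ⟨n - 1, by omega⟩
  have e2 : 2 * (2:ℝ)⁻¹ ^ (k+1) = (2:ℝ)⁻¹ ^ k := by rw [pow_succ]; ring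
  have hs' : 1 - 2 * (2:ℝ)⁻¹ ^ (k+1) ≤ s + α := by
    by_contra hc
    push Not at hc
    exact hno k (1 - (2:ℝ)⁻¹ ^ k - α) (by linarith) (by linarith) (by ring)
  have ht' : t + α ≤ 1 - (2:ℝ)⁻¹ ^ (k+1) := by
    by_contra hc
    push Not at hc
    exact hno (k+1) (1 - (2:ℝ)⁻¹ ^ (k+1) - α) (by linarith) (by linarith) (by ring)
  have hF : ∀ z, s ≤ z → z < t → rotOdo q π z = z + (α - 1 + 3 * (2:ℝ)⁻¹ ^ (k+1)) := by
    intro z h1 h2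
    unfold rotOdo
    rw [hR z h1 h2, vnk_eq _ (k+1) (by linarith) (by linarith)]
    ring
  have hp : (0:ℝ) < (2:ℝ)⁻¹ ^ (k+1) := by positivity
  have hp1 : (2:ℝ)⁻¹ ^ k ≤ 1 := pow_le_one₀ (by norm_num) (by norm_num)
  constructor
  · refine ⟨s + (α - 1 + 3 * (2:ℝ)⁻¹ ^ (k+1)), t + (α - 1 + 3 * (2:ℝ)⁻¹ ^ (k+1)),
      by linarith, by linarith, ?_, ?_, by linarith, ?_⟩
    · rw [hF y hsy hyt]; linarith
    · rw [hF y hsy hyt]; linarith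
    · rintro z ⟨z1, z2⟩ hD
      set w := z - (α - 1 + 3 * (2:ℝ)⁻¹ ^ (k+1)) with hw
      have w1 : s ≤ w := by linarith
      have w2 : w < t := by linarith
      refine hz w ⟨w1, w2⟩ (D_back q hq π (hI w w1 w2) ?_)
      rw [hF w w1 w2, hw]
      simpa using hD
  · have hkN : k + 1 ≤ N := by
      by_contra hc
      have := half_pow_anti (show N ≤ k + 1 by omega)
      linarith
    obtain ⟨l, hl⟩ := Nat.exists_eq_add_of_le hkN
    refine ⟨(((π i : ℕ):ℤ) - ((i:ℕ):ℤ)) * 2 ^ N - q * 2 ^ N + 3 * q * 2 ^ l, ?_⟩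
    rw [hF y hsy hyt, hα, hl]
    push_cast
    rw [pow_add, inv_pow]
    field_simp
    ring

/-- `D` is dense in the set `I_np` of non-periodic points: every open interval
meeting `I_np` contains a point of `D`. -/
theorem Dset_dense_in_Inp (q : ℕ) (hq : 2 ≤ q) (π : Equiv.Perm (Fin q)) :
    ∀ u v : ℝ, u < v → (Set.Ioo u v ∩ Inp q π).Nonempty →
      (Set.Ioo u v ∩ Dset q π).Nonempty := by
  rintro u v huv ⟨x, ⟨hux, hxv⟩, hxI, hxn⟩
  by_contra hcon
  have hfree : ∀ z, u < z → z < v → z ∉ Dset q π := fun z h1 h2 h3 => hcon ⟨z, ⟨h1, h2⟩, h3⟩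
  have hq0 : (0:ℝ) < q := by positivity
  obtain ⟨r, hr, hre, H⟩ := exists_delta q (Dset q π) (min (1 / (q:ℝ)) (min v 1 - x))
    (lt_min (by positivity) (sub_pos.2 (lt_min hxv hxI.2)))
  have hrq : r < 1 / q := lt_of_lt_of_le hre (min_le_left _ _)
  have hrx : r < min v 1 - x := lt_of_lt_of_le hre (min_le_right _ _)
  obtain ⟨N, hN⟩ := exists_pow_lt_of_lt_one hr (show (2:ℝ)⁻¹ < 1 by norm_num)
  have hx : GoodPt q π r x := by
    refine ⟨x, min v 1, hxI.1, min_le_right _ _, le_rfl, lt_min hxv hxI.2, hrx.le, ?_⟩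
    rintro z ⟨z1, z2⟩
    exact hfree z (by linarith) (lt_of_lt_of_le z2 (min_le_left _ _))
  have hall : ∀ k : ℕ, GoodPt q π r ((rotOdo q π)^[k] x) ∧
      ∃ m : ℤ, (rotOdo q π)^[k] x = x + m / (q * 2 ^ N) := by
    intro k
    induction k with
    | zero => exact ⟨hx, 0, by simp⟩
    | succ k ih =>
      obtain ⟨g, m, hm⟩ := ih
      obtain ⟨g', m', hm'⟩ := good_step q hq π r _ hr hrq N hN H g
      rw [Function.iterate_succ_apply']
      refine ⟨g', m + m', ?_⟩
      rw [hm', hm]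
      push_cast
      ring
  have hfin : ((fun m : ℤ => x + (m:ℝ) / (q * 2 ^ N)) ''
      Set.Icc (-(q * 2 ^ N : ℤ)) (q * 2 ^ N)).Finite := (Set.finite_Icc _ _).image _
  have hmaps : Set.MapsTo (fun k : ℕ => (rotOdo q π)^[k] x) Set.univ
      ((fun m : ℤ => x + (m:ℝ) / (q * 2 ^ N)) '' Set.Icc (-(q * 2 ^ N : ℤ)) (q * 2 ^ N)) := by
    intro k _
    obtain ⟨-, m, hm⟩ := hall k
    refine ⟨m, ?_, hm.symm⟩
    have hI := odo_iter_mem q hq π x hxI k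
    rw [hm] at hI
    have hP : (0:ℝ) < q * 2 ^ N := by positivity
    have b1 : (m:ℝ) / (q * 2 ^ N) ≤ 1 := by linarith [hI.2, hxI.1]
    have b2 : -1 ≤ (m:ℝ) / (q * 2 ^ N) := by linarith [hI.1, hxI.2]
    rw [div_le_iff₀ hP] at b1
    rw [le_div_iff₀ hP] at b2
    constructor
    · have : (-(q * 2 ^ N) : ℝ) ≤ m := by linarith
      exact_mod_cast this
    · have : (m:ℝ) ≤ q * 2 ^ N := by linarith
      exact_mod_cast this
  obtain ⟨k, -, l, -, hkl, he⟩ :=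
    Set.infinite_univ.exists_ne_map_eq_of_mapsTo hmaps hfin
  apply hxn
  refine ⟨hxI, ?_⟩
  rcases lt_or_gt_of_ne hkl with h | h
  · refine ⟨l - k, by omega, odo_cancel q hq π hxI k (l - k) ?_⟩
    rw [Nat.sub_add_cancel h.le]; exact he.symm
  · refine ⟨k - l, by omega, odo_cancel q hq π hxI l (k - l) ?_⟩
    rw [Nat.sub_add_cancel h.le]; exact he
end

section
/- Let q ≥ 2 and π be a permutation of {0,…,q−1}. The topological entropy of the rotated odometer F_π : [0,1) → [0,1), defined as the Bowen–Dinaburg cover entropy of the (not necessarily continuous) self-map F_π of the uniform space [0,1) with the uniformity induced by the Euclidean metric, equals 0. -/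
/-- The rotated odometer as a self-map of the uniform space `[0,1)` (with the uniformity
induced from the Euclidean metric on `ℝ`).  Since `F_π` maps `[0,1)` into `(0,1) ⊆ [0,1)`,
the junk value in the `else` branch is never attained. -/
noncomputable def rotOdoSub (q : ℕ) (π : Equiv.Perm (Fin q)) :
    (Set.Ico (0 : ℝ) 1) → (Set.Ico (0 : ℝ) 1) := fun x =>
  if h : rotOdo q π x ∈ Set.Ico (0 : ℝ) 1 then ⟨rotOdo q π x, h⟩
  else ⟨0, by constructor <;> norm_num⟩

namespace RotOdoAux

lemma vnk_eq {x : ℝ} {n : ℕ} (h1 : 1 - (2 : ℝ)⁻¹ ^ n ≤ x) (h2 : x < 1 - (2 : ℝ)⁻¹ ^ (n + 1)) :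
    vnk x = x - 1 + 3 * (2 : ℝ)⁻¹ ^ (n + 1) := by
  classical
  have h : ∃ n : ℕ, x < 1 - (2 : ℝ)⁻¹ ^ n := ⟨n + 1, h2⟩
  unfold vnk
  rw [dif_pos h]
  have : Nat.find h = n + 1 := by
    rw [Nat.find_eq_iff]
    refine ⟨h2, fun m hm hlt => ?_⟩
    have : (2 : ℝ)⁻¹ ^ n ≤ (2 : ℝ)⁻¹ ^ m :=
      pow_le_pow_of_le_one (by norm_num) (by norm_num) (by omega)
    linarith
  rw [← this]

lemma exists_level {x : ℝ} (h0 : 0 ≤ x) (h1 : x < 1) :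
    ∃ n : ℕ, 1 - (2 : ℝ)⁻¹ ^ n ≤ x ∧ x < 1 - (2 : ℝ)⁻¹ ^ (n + 1) := by
  obtain ⟨n, hn1, hn2⟩ := exists_nat_pow_near_of_lt_one (x := 1 - x) (y := (2 : ℝ)⁻¹)
    (by linarith) (by linarith) (by norm_num) (by norm_num)
  exact ⟨n, by linarith, by linarith⟩

lemma vnk_mem {x : ℝ} (h0 : 0 ≤ x) (h1 : x < 1) : 0 < vnk x ∧ vnk x < 1 := by
  obtain ⟨n, hn1, hn2⟩ := exists_level h0 h1
  rw [vnk_eq hn1 hn2]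
  have hp : 0 < (2 : ℝ)⁻¹ ^ n := by positivity
  have hp1 : (2 : ℝ)⁻¹ ^ n ≤ 1 := pow_le_one₀ (by norm_num) (by norm_num)
  rw [pow_succ] at *
  constructor <;> linarith

variable {q : ℕ} (π : Equiv.Perm (Fin q))

lemma cell_unique (hq : 0 < q) {x : ℝ} {i j : ℕ}
    (hi : x ∈ Set.Ico ((i : ℝ) / q) (((i : ℝ) + 1) / q))
    (hj : x ∈ Set.Ico ((j : ℝ) / q) (((j : ℝ) + 1) / q)) : i = j := by
  have hq' : (0 : ℝ) < q := by exact_mod_cast hq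
  obtain ⟨a, b⟩ := hi
  obtain ⟨c, d⟩ := hj
  rw [div_le_iff₀ hq'] at a c
  rw [lt_div_iff₀ hq'] at b d
  have h1 : (i : ℝ) < j + 1 := by linarith
  have h2 : (j : ℝ) < i + 1 := by linarith
  have h1' : i < j + 1 := by exact_mod_cast h1
  have h2' : j < i + 1 := by exact_mod_cast h2
  omega

lemma rotPerm_eq (hq : 0 < q) {x : ℝ} {i : Fin q}
    (hi : x ∈ Set.Ico (((i : ℕ) : ℝ) / q) ((((i : ℕ) : ℝ) + 1) / q)) :
    rotPerm q π x = x + ((((π i : Fin q) : ℕ) : ℝ) - ((i : ℕ) : ℝ)) / q := by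
  have h : ∃ i : Fin q, x ∈ Set.Ico (((i : ℕ) : ℝ) / q) ((((i : ℕ) : ℝ) + 1) / q) := ⟨i, hi⟩
  unfold rotPerm
  rw [dif_pos h]
  have : h.choose = i := Fin.ext (cell_unique hq h.choose_spec hi)
  rw [this]

lemma exists_cell (hq : 0 < q) {x : ℝ} (h0 : 0 ≤ x) (h1 : x < 1) :
    ∃ i : Fin q, x ∈ Set.Ico (((i : ℕ) : ℝ) / q) ((((i : ℕ) : ℝ) + 1) / q) := by
  have hq' : (0 : ℝ) < q := by exact_mod_cast hq
  have hx : 0 ≤ x * q := by positivity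
  refine ⟨⟨⌊x * q⌋₊, ?_⟩, ?_, ?_⟩
  · rw [Nat.floor_lt hx]
    nlinarith
  · rw [div_le_iff₀ hq']
    exact Nat.floor_le hx
  · rw [lt_div_iff₀ hq']
    exact Nat.lt_floor_add_one _

lemma rotPerm_mem (hq : 0 < q) {x : ℝ} (h0 : 0 ≤ x) (h1 : x < 1) :
    0 ≤ rotPerm q π x ∧ rotPerm q π x < 1 := by
  have hq' : (0 : ℝ) < q := by exact_mod_cast hq
  obtain ⟨i, hi⟩ := exists_cell hq h0 h1
  rw [rotPerm_eq π hq hi]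
  obtain ⟨a, b⟩ := hi
  have h2 : (((π i : Fin q) : ℕ) : ℝ) + 1 ≤ q := by exact_mod_cast (π i).2
  have h3 : (0 : ℝ) ≤ (((π i : Fin q) : ℕ) : ℝ) := by positivity
  rw [div_le_iff₀ hq'] at a
  rw [lt_div_iff₀ hq'] at b
  have e : (x + ((((π i : Fin q) : ℕ) : ℝ) - ((i : ℕ) : ℝ)) / q) * q
      = x * q + ((((π i : Fin q) : ℕ) : ℝ) - ((i : ℕ) : ℝ)) := by
    field_simp
  constructor
  · by_contra! hneg
    nlinarith
  · by_contra! hge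
    nlinarith

lemma rotOdo_mem (hq : 0 < q) {x : ℝ} (h0 : 0 ≤ x) (h1 : x < 1) :
    0 < rotOdo q π x ∧ rotOdo q π x < 1 := by
  obtain ⟨a, b⟩ := rotPerm_mem π hq h0 h1
  exact vnk_mem a b

lemma sub_coe (hq : 0 < q) (x : Set.Ico (0 : ℝ) 1) :
    (rotOdoSub q π x : ℝ) = rotOdo q π x := by
  obtain ⟨a, b⟩ := rotOdo_mem π hq x.2.1 x.2.2
  unfold rotOdoSub
  rw [dif_pos ⟨a.le, b⟩]

lemma rotOdo_right (hq : 0 < q) {x : ℝ} (h0 : 0 ≤ x) (h1 : x < 1) :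
    ∃ δ > 0, ∀ y, x ≤ y → y < x + δ → rotOdo q π y = rotOdo q π x + (y - x) := by
  obtain ⟨i, hi⟩ := exists_cell hq h0 h1
  obtain ⟨a, b⟩ := rotPerm_mem π hq h0 h1
  obtain ⟨n, hn1, hn2⟩ := exists_level a b
  have hx := rotPerm_eq π hq hi
  refine ⟨min ((((i : ℕ) : ℝ) + 1) / q - x) (1 - (2 : ℝ)⁻¹ ^ (n + 1) - rotPerm q π x),
    lt_min (by linarith [hi.2]) (by linarith), fun y hxy hy => ?_⟩
  have hy1 := lt_of_lt_of_le hy (add_le_add_right (min_le_left _ _) x)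
  have hy2 := lt_of_lt_of_le hy (add_le_add_right (min_le_right _ _) x)
  have hyR := rotPerm_eq π hq (x := y) (i := i) ⟨by linarith [hi.1], by linarith⟩
  unfold rotOdo
  rw [vnk_eq hn1 hn2, vnk_eq (x := rotPerm q π y) (n := n) (by linarith) (by linarith)]
  linarith

lemma iter_right (hq : 0 < q) (t : ℕ) (x : Set.Ico (0 : ℝ) 1) :
    ∃ δ > 0, ∀ y : Set.Ico (0 : ℝ) 1, (x : ℝ) ≤ y → (y : ℝ) < x + δ →
      ((rotOdoSub q π)^[t] y : ℝ) = ((rotOdoSub q π)^[t] x : ℝ) + (y - x) := by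
  induction t with
  | zero => exact ⟨1, one_pos, fun y _ _ => by simp⟩
  | succ t ih =>
    obtain ⟨δ, hδ, h⟩ := ih
    obtain ⟨δ', hδ', h'⟩ := rotOdo_right π hq ((rotOdoSub q π)^[t] x).2.1
      ((rotOdoSub q π)^[t] x).2.2
    refine ⟨min δ δ', lt_min hδ hδ', fun y hxy hy => ?_⟩
    have hy1 := lt_of_lt_of_le hy (add_le_add_right (min_le_left _ _) (x : ℝ))
    have hy2 := lt_of_lt_of_le hy (add_le_add_right (min_le_right _ _) (x : ℝ))
    have e := h y hxy hy1
    rw [Function.iterate_succ_apply', Function.iterate_succ_apply', sub_coe π hq, sub_coe π hq,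
      h' _ (by linarith) (by linarith)]
    linarith

/-- No return to a small neighbourhood of `0` in a short time. -/
lemma no_return (hq : 0 < q) (m : ℕ) : ∃ η > 0, ∀ x : Set.Ico (0 : ℝ) 1, (x : ℝ) < η →
    ∀ t, 1 ≤ t → t ≤ m → η ≤ ((rotOdoSub q π)^[t] x : ℝ) := by
  induction m with
  | zero => exact ⟨1, one_pos, fun x _ t h1 h2 => by omega⟩
  | succ m ih =>
    obtain ⟨η, hη, h⟩ := ih
    obtain ⟨δ, hδ, h'⟩ := iter_right π hq (m + 1) ⟨0, le_refl _, one_pos⟩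
    have hc : 0 < ((rotOdoSub q π)^[m + 1] ⟨0, le_refl _, one_pos⟩ : ℝ) := by
      rw [Function.iterate_succ_apply', sub_coe π hq]
      have hp := ((rotOdoSub q π)^[m] ⟨0, le_refl _, one_pos⟩).2
      exact (rotOdo_mem π hq hp.1 hp.2).1
    set c := ((rotOdoSub q π)^[m + 1] ⟨0, le_refl _, one_pos⟩ : ℝ)
    refine ⟨min η (min δ c), lt_min hη (lt_min hδ hc), fun x hx t h1 h2 => ?_⟩
    have hx1 := lt_of_lt_of_le hx (min_le_left _ _)
    have hx2 := lt_of_lt_of_le hx ((min_le_right _ _).trans (min_le_left _ _))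
    rcases Nat.lt_or_ge m t with h3 | h3
    · obtain rfl : t = m + 1 := by omega
      rw [h' x x.2.1 (by simpa using hx2)]
      refine ((min_le_right _ _).trans (min_le_right _ _)).trans ?_
      have := x.2.1
      simp only [sub_zero]
      linarith
    · exact (min_le_left _ _).trans (h x hx1 t h1 h3)

/-- the cell index at level `k` -/
noncomputable def cidx (q k : ℕ) (x : ℝ) : ℤ := ⌊x * (q * 2 ^ k : ℝ)⌋

lemma cidx_add {k : ℕ} {x y s : ℝ} (z : ℤ) (hs : s * (q * 2 ^ k : ℝ) = z)
    (h : cidx q k x = cidx q k y) : cidx q k (x + s) = cidx q k (y + s) := by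
  unfold cidx at *
  rw [add_mul, add_mul, hs, Int.floor_add_intCast, Int.floor_add_intCast, h]

lemma cidx_le (hq : 0 < q) {k : ℕ} {x y s : ℝ} (z : ℤ) (hs : s * (q * 2 ^ k : ℝ) = z)
    (h : cidx q k x = cidx q k y) : s ≤ x ↔ s ≤ y := by
  have hq' : (0 : ℝ) < q := by exact_mod_cast hq
  have hK : (0 : ℝ) < q * 2 ^ k := by positivity
  unfold cidx at h
  rw [← mul_le_mul_iff_left₀ hK, ← mul_le_mul_iff_left₀ (b := s) (c := y) hK, hs, ← Int.le_floor,
    ← Int.le_floor, h]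

lemma half_pow {k n : ℕ} (h : n ≤ k) : (2 : ℝ)⁻¹ ^ n * 2 ^ k = 2 ^ (k - n) := by
  obtain ⟨d, rfl⟩ := Nat.exists_eq_add_of_le h
  rw [pow_add, ← mul_assoc, ← mul_pow]
  simp

lemma rotPerm_cidx (hq : 0 < q) (k : ℕ) {x y : ℝ} (x0 : 0 ≤ x) (x1 : x < 1)
    (h : cidx q k x = cidx q k y) : cidx q k (rotPerm q π x) = cidx q k (rotPerm q π y) := by
  have hq' : (q : ℝ) ≠ 0 := by positivity
  obtain ⟨i, hi⟩ := exists_cell hq x0 x1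
  have hy : y ∈ Set.Ico (((i : ℕ) : ℝ) / q) ((((i : ℕ) : ℝ) + 1) / q) := by
    refine ⟨(cidx_le hq ((i : ℕ) * 2 ^ k : ℤ) ?_ h).1 hi.1, ?_⟩
    · push_cast; field_simp
    · rw [← not_le, ← cidx_le hq (((i : ℕ) + 1) * 2 ^ k : ℤ) ?_ h, not_le]
      · exact hi.2
      · push_cast; field_simp
  rw [rotPerm_eq π hq hi, rotPerm_eq π hq hy]
  refine cidx_add ((((π i : Fin q) : ℕ) - (i : ℕ)) * 2 ^ k : ℤ) ?_ h
  push_cast; field_simp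

lemma vnk_cidx (hq : 0 < q) (k : ℕ) {x y : ℝ} (x0 : 0 ≤ x) (x1 : x < 1) (y0 : 0 ≤ y) (y1 : y < 1)
    (h : cidx q k x = cidx q k y) : cidx q k (vnk x) = cidx q k (vnk y) ∨
      (vnk x < (2 : ℝ)⁻¹ ^ k ∧ vnk y < (2 : ℝ)⁻¹ ^ k) := by
  have small : ∀ z : ℝ, 0 ≤ z → z < 1 → 1 - (2 : ℝ)⁻¹ ^ k ≤ z → vnk z < (2 : ℝ)⁻¹ ^ k := by
    intro z z0 z1 hz
    obtain ⟨n, hn1, hn2⟩ := exists_level z0 z1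
    rw [vnk_eq hn1 hn2]
    have hkn : k ≤ n := by
      by_contra! hlt
      have : (2 : ℝ)⁻¹ ^ k ≤ (2 : ℝ)⁻¹ ^ (n + 1) :=
        pow_le_pow_of_le_one (by norm_num) (by norm_num) (by omega)
      linarith
    have : (2 : ℝ)⁻¹ ^ n ≤ (2 : ℝ)⁻¹ ^ k :=
      pow_le_pow_of_le_one (by norm_num) (by norm_num) hkn
    rw [pow_succ] at *
    linarith
  have key : ∀ n ≤ k, (1 - (2 : ℝ)⁻¹ ^ n) * (q * 2 ^ k : ℝ)
      = ((q * 2 ^ k - q * 2 ^ (k - n) : ℤ) : ℝ) := by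
    intro n hn
    have := half_pow hn
    push_cast
    linear_combination (-(q : ℝ)) * this
  obtain ⟨n, hn1, hn2⟩ := exists_level x0 x1
  rcases Nat.lt_or_ge n k with hnk | hnk
  · left
    have hy1 := (cidx_le hq _ (key n hnk.le) h).1 hn1
    have hy2 : y < 1 - (2 : ℝ)⁻¹ ^ (n + 1) := by
      rw [← not_le, ← cidx_le hq _ (key (n + 1) hnk) h, not_le]
      exact hn2
    rw [vnk_eq hn1 hn2, vnk_eq hy1 hy2]
    have e : ∀ z : ℝ, z - 1 + 3 * (2 : ℝ)⁻¹ ^ (n + 1) = z + (-1 + 3 * (2 : ℝ)⁻¹ ^ (n + 1)) :=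
      fun z => by ring
    rw [e, e]
    refine cidx_add (-(q * 2 ^ k) + 3 * q * 2 ^ (k - (n + 1)) : ℤ) ?_ h
    have := half_pow (k := k) (n := n + 1) hnk
    push_cast
    linear_combination (3 * (q : ℝ)) * this
  · right
    have hx : 1 - (2 : ℝ)⁻¹ ^ k ≤ x := by
      have : (2 : ℝ)⁻¹ ^ n ≤ (2 : ℝ)⁻¹ ^ k :=
        pow_le_pow_of_le_one (by norm_num) (by norm_num) hnk
      linarith
    exact ⟨small x x0 x1 hx, small y y0 y1 ((cidx_le hq _ (key k le_rfl) h).1 hx)⟩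

/-- Abstract counting: code for the itineraries. -/
lemma exists_block_code {X : Type*} (T : X → X) (j : X → ℤ) (hj : ∀ x, 0 ≤ j x) (q m : ℕ)
    (H1 : ∀ x y, j x = j y → j (T x) = j (T y) ∨ (j (T x) < q ∧ j (T y) < q))
    (H2 : ∀ x, j x < q → ∀ t, 1 ≤ t → t ≤ m → ¬ j (T^[t] x) < q) :
    ∃ c : X → Fin (q + 1), ∀ x y, j x = j y → c x = c y →
      ∀ i ≤ m, j (T^[i] x) = j (T^[i] y) := by
  classical
  let c : X → Fin (q + 1) := fun x =>
    if h : ∃ t, (1 ≤ t ∧ t ≤ m) ∧ j (T^[t] x) < q then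
      ⟨(j (T^[h.choose] x)).toNat, by have := h.choose_spec.2; omega⟩ else 0
  have hc : ∀ x t, 1 ≤ t → t ≤ m → j (T^[t] x) < q → ((c x : ℕ) : ℤ) = j (T^[t] x) := by
    intro x t h1 h2 h3
    have h : ∃ t, (1 ≤ t ∧ t ≤ m) ∧ j (T^[t] x) < q := ⟨t, ⟨h1, h2⟩, h3⟩
    have uniq : ∀ s t, s < t → t ≤ m → j (T^[s] x) < q → j (T^[t] x) < q → False := by
      intro s t hst htm hs ht
      refine H2 _ hs (t - s) (by omega) (by omega) ?_
      rw [← Function.iterate_add_apply, Nat.sub_add_cancel hst.le]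
      exact ht
    have e : h.choose = t := by
      rcases lt_trichotomy h.choose t with hl | hl | hl
      · exact (uniq _ _ hl h2 h.choose_spec.2 h3).elim
      · exact hl
      · exact (uniq _ _ hl h.choose_spec.1.2 h3 h.choose_spec.2).elim
    simp only [c, dif_pos h, e]
    exact Int.toNat_of_nonneg (hj _)
  refine ⟨c, fun x y hxy hcxy i => ?_⟩
  induction i with
  | zero => intro _; simpa using hxy
  | succ i ih =>
    intro hi
    rcases H1 _ _ (ih (by omega)) with h | ⟨h1, h2⟩
    · rw [Function.iterate_succ_apply', Function.iterate_succ_apply', h]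
    · rw [← Function.iterate_succ_apply' T] at h1 h2
      rw [← hc x (i + 1) (by omega) hi h1, ← hc y (i + 1) (by omega) hi h2, hcxy]

lemma exists_code {X : Type*} (T : X → X) (j : X → ℤ) (hj : ∀ x, 0 ≤ j x) (q m r : ℕ)
    (hm : 0 < m)
    (H1 : ∀ x y, j x = j y → j (T x) = j (T y) ∨ (j (T x) < q ∧ j (T y) < q))
    (H2 : ∀ x, j x < q → ∀ t, 1 ≤ t → t ≤ m → ¬ j (T^[t] x) < q) :
    ∃ c : X → (Fin r → Fin (q + 1)), ∀ x y, j x = j y → c x = c y →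
      ∀ i < m * r, j (T^[i] x) = j (T^[i] y) := by
  obtain ⟨c, hc⟩ := exists_block_code T j hj q m H1 H2
  refine ⟨fun x s => c (T^[m * s] x), fun x y hxy hcxy => ?_⟩
  have step : ∀ s ≤ r, j (T^[m * s] x) = j (T^[m * s] y) := by
    intro s
    induction s with
    | zero => intro _; simpa using hxy
    | succ s ih =>
      intro hs
      have := hc _ _ (ih (by omega)) (congrFun hcxy ⟨s, by omega⟩) m le_rfl
      rw [← Function.iterate_add_apply, ← Function.iterate_add_apply] at this
      rw [Nat.mul_succ, Nat.add_comm]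
      exact this
  intro i hi
  have hs : i / m < r := Nat.div_lt_of_lt_mul hi
  have := hc _ _ (step (i / m) hs.le) (congrFun hcxy ⟨i / m, hs⟩) (i % m) (Nat.mod_lt _ hm).le
  rw [← Function.iterate_add_apply, ← Function.iterate_add_apply, Nat.mod_add_div] at this
  exact this

lemma exists_cover (hq : 0 < q) (m : ℕ) (hm : 0 < m) (ε : ℝ) (hε : 0 < ε) :
    ∃ r : ℕ, 0 < r ∧ ∃ s : Finset (Set.Ico (0 : ℝ) 1),
      Dynamics.IsDynCoverOf (rotOdoSub q π) Set.univ {p | dist p.1 p.2 < ε} (m * r) (s : Set _) ∧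
      s.card ≤ (q + 1) ^ (2 * r) := by
  classical
  have hq1 : (1 : ℝ) ≤ q := by exact_mod_cast hq
  obtain ⟨η, hη, hret⟩ := no_return π hq m
  obtain ⟨k, hk⟩ := exists_pow_lt_of_lt_one (lt_min hη hε) (show (2 : ℝ)⁻¹ < 1 by norm_num)
  have hk1 := lt_of_lt_of_le hk (min_le_left _ _)
  have hk2 := lt_of_lt_of_le hk (min_le_right _ _)
  have h2k : (2 : ℝ)⁻¹ ^ k * 2 ^ k = 1 := by simpa using half_pow (le_refl k)
  have h2p : (0 : ℝ) < 2 ^ k := by positivity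
  have hK : (0 : ℝ) < q * 2 ^ k := by positivity
  have lt_iff : ∀ x : ℝ, cidx q k x < q ↔ x < (2 : ℝ)⁻¹ ^ k := by
    intro x
    unfold cidx
    rw [Int.floor_lt, ← mul_lt_mul_iff_left₀ (b := x) (c := (2 : ℝ)⁻¹ ^ k) hK]
    have : (2 : ℝ)⁻¹ ^ k * (q * 2 ^ k) = q := by linear_combination (q : ℝ) * h2k
    rw [this]
    simp
  have hj0 : ∀ x : Set.Ico (0 : ℝ) 1, 0 ≤ cidx q k x := fun x =>
    Int.floor_nonneg.2 (mul_nonneg x.2.1 hK.le)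
  have hjK : ∀ x : Set.Ico (0 : ℝ) 1, cidx q k x < (q * 2 ^ k : ℕ) := by
    intro x
    unfold cidx
    rw [Int.floor_lt]
    push_cast
    nlinarith [x.2.2]
  set r : ℕ := q * 2 ^ k with hr
  have hr0 : 0 < r := by positivity
  obtain ⟨c, hc⟩ := exists_code (rotOdoSub q π) (fun x => cidx q k x) hj0 q m r hm
    (by
      intro x y hxy
      simp only [sub_coe π hq, lt_iff]
      have hx := rotPerm_mem π hq x.2.1 x.2.2
      have hy := rotPerm_mem π hq y.2.1 y.2.2
      exact vnk_cidx hq k hx.1 hx.2 hy.1 hy.2 (rotPerm_cidx π hq k x.2.1 x.2.2 hxy))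
    (by
      intro x hx t h1 h2
      simp only [lt_iff] at hx ⊢
      have := hret x (hx.trans hk1) t h1 h2
      linarith)
  let code : Set.Ico (0 : ℝ) 1 → Fin r × (Fin r → Fin (q + 1)) := fun x =>
    (⟨(cidx q k x).toNat, by have := hjK x; have := hj0 x; omega⟩, c x)
  let x0 : Set.Ico (0 : ℝ) 1 := ⟨0, le_refl _, one_pos⟩
  let g : Fin r × (Fin r → Fin (q + 1)) → Set.Ico (0 : ℝ) 1 := fun d =>
    if h : ∃ x, code x = d then h.choose else x0
  have hg : ∀ x, code (g (code x)) = code x := by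
    intro x
    have h : ∃ y, code y = code x := ⟨x, rfl⟩
    simp only [g, dif_pos h]
    exact h.choose_spec
  refine ⟨r, hr0, Finset.univ.image g, ?_, ?_⟩
  · intro x _
    refine ⟨g (code x), by simp, ?_⟩
    rw [Dynamics.mem_dynEntourage]
    intro i hi
    have h := hg x
    have e1 : cidx q k (g (code x)) = cidx q k x := by
      have := congrArg (fun d => ((d.1 : ℕ) : ℤ)) h
      simp only [code] at this
      have a := hj0 x
      have b := hj0 (g (code x))
      simp only [code] at b ⊢
      omega
    have e2 := congrArg Prod.snd h
    have := hc x (g (code x)) e1.symm e2.symm i hi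
    simp only [cidx] at this
    have h3 := Int.abs_sub_lt_one_of_floor_eq_floor this
    simp only [Set.mem_setOf_eq, Subtype.dist_eq, Real.dist_eq]
    rw [← sub_mul, abs_mul, abs_of_pos hK] at h3
    refine lt_trans ?_ hk2
    have h4 := abs_nonneg ((((rotOdoSub q π)^[i] x : Set.Ico (0 : ℝ) 1) : ℝ)
      - ((rotOdoSub q π)^[i] (g (code x)) : Set.Ico (0 : ℝ) 1))
    by_contra! h5
    nlinarith [mul_le_mul_of_nonneg_right h5 h2p.le, mul_nonneg h4 h2p.le]
  · refine Finset.card_image_le.trans ?_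
    rw [Finset.card_univ, Fintype.card_prod, Fintype.card_fun, Fintype.card_fin, Fintype.card_fin,
      two_mul, pow_add]
    exact Nat.mul_le_mul_right _ (Nat.lt_pow_self (by omega)).le

lemma entourage_bound (hq : 0 < q) (m : ℕ) (hm : 0 < m) {U : SetRel (Set.Ico (0 : ℝ) 1) (Set.Ico (0 : ℝ) 1)}
    (hU : U ∈ uniformity (Set.Ico (0 : ℝ) 1)) :
    Dynamics.coverEntropyEntourage (rotOdoSub q π) Set.univ U ≤
      ((2 * Real.log (q + 1) / m : ℝ) : EReal) := by
  obtain ⟨ε, hε, hεU⟩ := Metric.mem_uniformity_dist.1 hU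
  obtain ⟨r, hr, s, hs, hcard⟩ := exists_cover π hq m hm (ε / 2) (by linarith)
  set V : SetRel (Set.Ico (0 : ℝ) 1) (Set.Ico (0 : ℝ) 1) := {p | dist p.1 p.2 < ε / 2} with hV
  haveI : V.IsSymm := ⟨fun a b h => by
    simp only [hV, Set.mem_setOf_eq] at h ⊢
    rwa [dist_comm]⟩
  have hsub : SetRel.comp V V ⊆ U := by
    rintro ⟨a, b⟩ ⟨z, h1, h2⟩
    simp only [hV, Set.mem_setOf_eq] at h1 h2
    exact hεU (by linarith [dist_triangle a z b])
  refine (Dynamics.coverEntropyEntourage_antitone _ _ hsub).trans ?_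
  refine (hs.coverEntropyEntourage_le_log_card_div (Set.mapsTo_univ _ _) (by positivity)).trans ?_
  have hs0 : 0 < s.card := by
    obtain ⟨y, hy, _⟩ := hs (Set.mem_univ (⟨0, le_refl _, one_pos⟩ : Set.Ico (0 : ℝ) 1))
    exact Finset.card_pos.2 ⟨y, hy⟩
  have e : ENNReal.log (s.card : ENNReal) = ((Real.log s.card : ℝ) : EReal) := by
    rw [← ENNReal.ofReal_natCast, ENNReal.log_ofReal_of_pos (by exact_mod_cast hs0)]
  rw [e]
  have e2 : (((m * r : ℕ)) : EReal) = (((m * r : ℕ) : ℝ) : EReal) := by norm_cast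
  rw [e2, ← EReal.coe_div, EReal.coe_le_coe_iff]
  have hm' : (0 : ℝ) < m := by exact_mod_cast hm
  have hr' : (0 : ℝ) < r := by exact_mod_cast hr
  have hl : Real.log s.card ≤ (2 * r : ℕ) * Real.log (q + 1) := by
    rw [← Real.log_pow]
    exact Real.log_le_log (by exact_mod_cast hs0) (by exact_mod_cast hcard)
  push_cast at hl ⊢
  rw [div_le_div_iff₀ (by positivity) hm']
  nlinarith

end RotOdoAux

/-- the topological entropy (Bowen–Dinaburg cover entropy over the whole space)
of the rotated odometer `F_π : [0,1) → [0,1)` is `0`. -/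
theorem rotOdo_coverEntropy_eq_zero (q : ℕ) (hq : 2 ≤ q) (π : Equiv.Perm (Fin q)) :
    Dynamics.coverEntropy (rotOdoSub q π) Set.univ = 0 := by
  apply le_antisymm
  · refine iSup₂_le fun U hU => ?_
    have ht : Filter.Tendsto (fun m : ℕ => ((2 * Real.log (q + 1) / m : ℝ) : EReal))
        Filter.atTop (nhds ((0 : ℝ) : EReal)) :=
      (continuous_coe_real_ereal.tendsto 0).comp
        (tendsto_const_div_atTop_nhds_zero_nat (2 * Real.log (q + 1)))
    refine ge_of_tendsto ht ?_
    filter_upwards [Filter.eventually_gt_atTop 0] with m hm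
    exact RotOdoAux.entourage_bound π (by omega) m hm hU
  · exact Dynamics.coverEntropy_nonneg _ ⟨⟨0, le_refl _, one_pos⟩, Set.mem_univ _⟩
end

section
/- Let q ≥ 2 and π be a permutation of {0,…,q−1}, and let F_π be the rotated odometer. The set of Borel probability measures μ on [0,1) that are F_π-invariant, ergodic for F_π, and satisfy μ(I_per) = 0 (i.e. are carried by the aperiodic part) is finite, of cardinality at most q. -/
open MeasureTheory in
/-- The set of Borel probability measures on `[0,1)` (i.e. probability measures on `ℝ` giving
zero mass to the complement of `[0,1)`) that are `F_π`-invariant, ergodic, and carried by the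
aperiodic part (give zero mass to the set of periodic points). -/
noncomputable def ergAperiodicMeasures (q : ℕ) (π : Equiv.Perm (Fin q)) :
    Set (Measure ℝ) :=
  {μ | IsProbabilityMeasure μ ∧ μ (Set.Ico (0 : ℝ) 1)ᶜ = 0 ∧
    (∀ A : Set ℝ, MeasurableSet A → μ (rotOdo q π ⁻¹' A) = μ A) ∧
    (∀ A : Set ℝ, MeasurableSet A → rotOdo q π ⁻¹' A = A → μ A = 0 ∨ μ A = 1) ∧
    μ {x ∈ Set.Ico (0 : ℝ) 1 | ∃ n : ℕ, 1 ≤ n ∧ (rotOdo q π)^[n] x = x} = 0}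


open MeasureTheory Set Filter Topology

namespace RotOdo

/-- Distinct ergodic probability measures are mutually singular. -/
lemma ergodic_mutuallySingular {f : ℝ → ℝ} {μ ν : Measure ℝ} [IsProbabilityMeasure μ]
    [IsProbabilityMeasure ν] (hμ : Ergodic f μ) (hν : Ergodic f ν) (hne : μ ≠ ν) :
    μ ⟂ₘ ν := by
  have h1 := hμ.toMeasurePreserving.withDensity_rnDeriv hν.toMeasurePreserving
  obtain ⟨c, hc⟩ := hν.eq_smul_of_absolutelyContinuous h1 (withDensity_absolutelyContinuous _ _)
  have hadd := Measure.singularPart_add_rnDeriv μ ν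
  rw [hc] at hadd
  by_cases hc0 : c = 0
  · rw [hc0, zero_smul, add_zero] at hadd
    rw [← hadd]
    exact Measure.mutuallySingular_singularPart μ ν
  · exfalso
    have hac : ν ≪ μ := by
      intro s hs
      rw [← hadd] at hs
      simp only [Measure.add_apply, Measure.smul_apply, smul_eq_mul, add_eq_zero, mul_eq_zero] at hs
      exact hs.2.resolve_left hc0
    obtain ⟨d, hd⟩ := hμ.eq_smul_of_absolutelyContinuous hν.toMeasurePreserving hac
    have : ν univ = d * μ univ := by rw [hd]; simp
    simp only [measure_univ, mul_one] at this
    rw [← this, one_smul] at hd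
    exact hne hd.symm

/-- If a finite linear combination of pairwise singular probability measures vanishes, it is trivial -/
lemma coeff_zero {ι : Type*} [Fintype ι] (μ : ι → Measure ℝ) [∀ i, IsProbabilityMeasure (μ i)]
    (hs : ∀ i j, i ≠ j → μ i ⟂ₘ μ j) (c : ι → ℝ)
    (h : ∀ A, MeasurableSet A → ∑ i, c i * (μ i).real A = 0) : c = 0 := by
  classical
  funext i
  have : ∀ j, ∃ S, MeasurableSet S ∧ μ i S = 1 ∧ (j ≠ i → μ j S = 0) := by
    intro j
    by_cases hj : j = i
    · exact ⟨univ, MeasurableSet.univ, by simp, fun h => absurd hj h⟩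
    · obtain ⟨S, hS, h1, h2⟩ := hs j i hj
      refine ⟨S, hS, ?_, fun _ => h1⟩
      rwa [prob_compl_eq_zero_iff hS] at h2
  choose S hSm hS1 hS0 using this
  have hm : MeasurableSet (⋂ j, S j) := MeasurableSet.iInter hSm
  have h2 := h _ hm
  have h1 : μ i (⋂ j, S j) = 1 := by
    rw [← prob_compl_eq_zero_iff hm, compl_iInter, measure_iUnion_null_iff]
    intro j
    rw [prob_compl_eq_zero_iff (hSm j)]; exact hS1 j
  rw [Finset.sum_eq_single i] at h2
  · simpa [Measure.real, h1] using h2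
  · intro j _ hj
    have : μ j (⋂ j, S j) = 0 := measure_mono_null (iInter_subset _ j) (hS0 j hj)
    simp [Measure.real, this]
  · simp

/-- The cells. -/
def cell (q n : ℕ) (k : ℤ) : Set ℝ := {x | x ∈ Ico (0:ℝ) 1 ∧ ⌊((q * 2 ^ n : ℕ) : ℝ) * x⌋ = k}

lemma cell_measurable (q n : ℕ) (k : ℤ) : MeasurableSet (cell q n k) := by
  apply MeasurableSet.inter measurableSet_Ico
  exact (Int.measurable_floor.comp (measurable_const_mul _)) (measurableSet_singleton k)

lemma cell_split (q n : ℕ) (k : ℤ) :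
    cell q n k = cell q (n+1) (2*k) ∪ cell q (n+1) (2*k+1) := by
  ext x
  simp only [cell, mem_union, mem_ofPred_eq, ← and_or_left]
  apply and_congr_right
  intro _
  have : ((q * 2 ^ (n+1) : ℕ) : ℝ) * x = 2 * (((q * 2 ^ n : ℕ) : ℝ) * x) := by
    push_cast; ring
  rw [this]
  generalize ((q * 2 ^ n : ℕ) : ℝ) * x = y
  simp only [Int.floor_eq_iff]
  push_cast
  constructor
  · rintro ⟨h1, h2⟩
    by_cases h : 2 * y < 2 * k + 1
    · left; constructor <;> linarith
    · right; constructor <;> linarith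
  · rintro (⟨h1, h2⟩ | ⟨h1, h2⟩) <;> constructor <;> linarith

lemma cell_disj (q n : ℕ) {k l : ℤ} (h : k ≠ l) : Disjoint (cell q n k) (cell q n l) := by
  rw [Set.disjoint_left]
  rintro x ⟨_, h1⟩ ⟨_, h2⟩
  exact h (h1.symm.trans h2)

/-- A combination vanishing on all cells vanishes identically. -/
lemma comb_zero {ι : Type*} [Fintype ι] (q : ℕ) (hq : 2 ≤ q) (μ : ι → Measure ℝ)
    [∀ i, IsProbabilityMeasure (μ i)]
    (h01 : ∀ i, μ i (Ico (0:ℝ) 1)ᶜ = 0) (c : ι → ℝ)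
    (h : ∀ n k, ∑ i, c i * (μ i).real (cell q n k) = 0) (A : Set ℝ) (hA : MeasurableSet A) :
    ∑ i, c i * (μ i).real A = 0 := by
  have hN : ∀ n, (0:ℝ) < ((q * 2 ^ n : ℕ) : ℝ) := by intro n; positivity
  -- grid points
  have h1 : ∀ n (j : ℕ), ∑ i, c i * (μ i).real (Iio ((j:ℝ) / ((q * 2 ^ n : ℕ) : ℝ)) ∩ Ico 0 1) = 0 := by
    intro n j
    induction j with
    | zero =>
      have : Iio (((0:ℕ):ℝ) / ((q * 2 ^ n : ℕ) : ℝ)) ∩ Ico (0:ℝ) 1 = ∅ := by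
        ext x; simp; intro a b; linarith
      simp only [this]; simp
    | succ j ih =>
      have e : Iio (((j+1:ℕ):ℝ) / ((q * 2 ^ n : ℕ) : ℝ)) ∩ Ico (0:ℝ) 1 =
          (Iio ((j:ℝ) / ((q * 2 ^ n : ℕ) : ℝ)) ∩ Ico 0 1) ∪ cell q n j := by
        ext x
        have hn := hN n
        simp only [cell, mem_inter_iff, mem_union, mem_Iio, mem_ofPred_eq, Int.floor_eq_iff,
          lt_div_iff₀ hn]
        push_cast
        constructor
        · rintro ⟨a, b⟩
          by_cases hx : x * (q * 2 ^ n) < j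
          · exact Or.inl ⟨hx, b⟩
          · exact Or.inr ⟨b, by linarith, by linarith⟩
        · rintro (⟨a, b⟩ | ⟨b, a, d⟩)
          · exact ⟨by linarith, b⟩
          · exact ⟨by linarith, b⟩
      have d : Disjoint (Iio ((j:ℝ) / ((q * 2 ^ n : ℕ) : ℝ)) ∩ Ico 0 1) (cell q n j) := by
        rw [Set.disjoint_left]
        rintro x ⟨a, _⟩ ⟨_, b⟩
        rw [mem_Iio, lt_div_iff₀ (hN n)] at a
        have := (Int.floor_eq_iff.1 b).1
        push_cast at *
        linarith
      simp only [e]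
      have := h n j
      have e2 : ∀ i, (μ i).real ((Iio ((j:ℝ) / ((q * 2 ^ n : ℕ) : ℝ)) ∩ Ico 0 1) ∪ cell q n j) =
          (μ i).real (Iio ((j:ℝ) / ((q * 2 ^ n : ℕ) : ℝ)) ∩ Ico 0 1) + (μ i).real (cell q n j) :=
        fun i => measureReal_union d (cell_measurable _ _ _)
      simp only [e2, mul_add, Finset.sum_add_distrib, ih, this, add_zero]
  have hcap : ∀ i (B : Set ℝ), (μ i).real (B ∩ Ico 0 1) = (μ i).real B := by
    intro i B
    unfold Measure.real
    rw [measure_inter_conull' (measure_mono_null (fun x hx => hx.2) (h01 i))]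
  have h2 : ∀ a : ℝ, ∑ i, c i * (μ i).real (Iio a) = 0 := by
    intro a
    have e : Iio a ∩ Ico 0 1 = ⋃ n : ℕ, (Iio (((⌊((q * 2 ^ n : ℕ) : ℝ) * a⌋₊ : ℕ) : ℝ) / ((q * 2 ^ n : ℕ) : ℝ)) ∩ Ico 0 1) := by
      rw [← iUnion_inter]
      ext x
      simp only [mem_inter_iff, mem_iUnion, mem_Iio]
      apply and_congr_left
      rintro ⟨hx0, hx1⟩
      constructor
      · intro hxa
        obtain ⟨n, hn⟩ := pow_unbounded_of_one_lt (1 / (a - x)) (one_lt_two : (1:ℝ) < 2)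
        refine ⟨n, ?_⟩
        rw [lt_div_iff₀ (hN n)]
        have h3 := Nat.lt_floor_add_one (((q * 2 ^ n : ℕ) : ℝ) * a)
        have h4 : 1 < (a - x) * 2 ^ n := by
          rw [div_lt_iff₀ (by linarith)] at hn; linarith
        have h5 : (1:ℝ) ≤ q := by exact_mod_cast (by omega : 1 ≤ q)
        have h6 : (a - x) * 2 ^ n ≤ q * ((a - x) * 2 ^ n) := by nlinarith
        push_cast at *
        nlinarith
      · rintro ⟨n, hn⟩
        rw [lt_div_iff₀ (hN n)] at hn
        have hn1 := hn
        have hn := hN n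
        have ha : 0 ≤ a := by
          by_contra hcon
          push Not at hcon
          have : ⌊((q * 2 ^ n : ℕ) : ℝ) * a⌋₊ = 0 := by
            apply Nat.floor_of_nonpos; nlinarith
          rw [this] at hn1
          push_cast at hn1 hn
          nlinarith
        have := Nat.floor_le (by positivity : 0 ≤ ((q * 2 ^ n : ℕ) : ℝ) * a)
        have h9 : x * ((q * 2 ^ n : ℕ) : ℝ) < a * ((q * 2 ^ n : ℕ) : ℝ) := by linarith
        exact lt_of_mul_lt_mul_right h9 hn.le
    have hmono : Monotone (fun n : ℕ => (Iio (((⌊((q * 2 ^ n : ℕ) : ℝ) * a⌋₊ : ℕ) : ℝ) / ((q * 2 ^ n : ℕ) : ℝ)) ∩ Ico (0:ℝ) 1)) := by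
      apply monotone_nat_of_le_succ
      intro n
      apply inter_subset_inter_left
      apply Iio_subset_Iio
      rw [div_le_div_iff₀ (hN n) (hN _)]
      have : 2 * ⌊((q * 2 ^ n : ℕ) : ℝ) * a⌋₊ ≤ ⌊((q * 2 ^ (n+1) : ℕ) : ℝ) * a⌋₊ := by
        by_cases ha : 0 ≤ a
        · apply Nat.le_floor
          have := Nat.floor_le (by positivity : 0 ≤ ((q * 2 ^ n : ℕ) : ℝ) * a)
          push_cast at *
          rw [pow_succ]; linarith
        · rw [Nat.floor_of_nonpos]
          · simp
          · have := hN n; nlinarith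
      have t : (2:ℝ) * (⌊((q * 2 ^ n : ℕ) : ℝ) * a⌋₊ : ℕ) ≤ (⌊((q * 2 ^ (n+1) : ℕ) : ℝ) * a⌋₊ : ℕ) := by
        exact_mod_cast this
      have e : ((q * 2 ^ (n+1) : ℕ) : ℝ) = 2 * ((q * 2 ^ n : ℕ) : ℝ) := by push_cast; ring
      calc _ = (2:ℝ) * (⌊((q * 2 ^ n : ℕ) : ℝ) * a⌋₊ : ℕ) * ((q * 2 ^ n : ℕ) : ℝ) := by rw [e]; ring
        _ ≤ _ := mul_le_mul_of_nonneg_right t (hN n).le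
    have ht : ∀ i, Tendsto (fun n : ℕ => (μ i).real (Iio (((⌊((q * 2 ^ n : ℕ) : ℝ) * a⌋₊ : ℕ) : ℝ) / ((q * 2 ^ n : ℕ) : ℝ)) ∩ Ico (0:ℝ) 1)) atTop (𝓝 ((μ i).real (Iio a))) := by
      intro i
      rw [← hcap i (Iio a), e]
      exact (ENNReal.tendsto_toReal (measure_ne_top _ _)).comp (tendsto_measure_iUnion_atTop hmono)
    have ht2 := tendsto_finsetSum Finset.univ (fun i _ => (ht i).const_mul (c i))
    simp only [h1] at ht2
    exact (tendsto_nhds_unique ht2 tendsto_const_nhds)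
  have huniv : ∑ i, c i * (μ i).real univ = 0 := by
    have := h2 1
    have e : ∀ i, (μ i).real (Iio 1) = (μ i).real univ := by
      intro i
      rw [← hcap i (Iio 1), ← hcap i univ]
      congr 1
      ext x; simp
    simpa only [e] using this
  induction A, hA using MeasurableSpace.induction_on_inter
    (s := range Iio) (BorelSpace.measurable_eq.trans (borel_eq_generateFrom_Iio ℝ)) isPiSystem_Iio with
  | empty => simp
  | basic t ht => obtain ⟨a, rfl⟩ := ht; exact h2 a
  | compl t htm ih =>
    have e : ∀ i, (μ i).real tᶜ = (μ i).real univ - (μ i).real t := fun i => measureReal_compl htm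
    simp only [e, mul_sub, Finset.sum_sub_distrib, huniv, ih, sub_zero]
  | iUnion f hd hm ih =>
    have : ∀ i, HasSum (fun n => c i * (μ i).real (f n)) (c i * (μ i).real (⋃ n, f n)) := by
      intro i
      apply HasSum.mul_left
      have e : (μ i).real (⋃ n, f n) = ∑' n, (μ i).real (f n) := by
        unfold Measure.real
        rw [measure_iUnion hd hm, ENNReal.tsum_toReal_eq (fun _ => measure_ne_top _ _)]
      rw [e]
      exact (summable_measure_toReal hm hd).hasSum
    have h3 := hasSum_sum (s := Finset.univ) (fun i _ => this i)
    simp only [ih] at h3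
    exact h3.unique hasSum_zero

lemma rotPerm_spec {q : ℕ} (hq : 2 ≤ q) (π : Equiv.Perm (Fin q)) {x : ℝ} (hx : x ∈ Ico (0:ℝ) 1) :
    ∃ i : Fin q, ((i:ℕ):ℝ) ≤ q * x ∧ q * x < ((i:ℕ):ℝ) + 1 ∧
      q * rotPerm q π x = q * x + (((π i : Fin q) : ℕ) : ℝ) - ((i:ℕ):ℝ) := by
  have hq0 : (0:ℝ) < q := by exact_mod_cast (by omega : 0 < q)
  have h : ∃ i : Fin q, x ∈ Set.Ico (((i : ℕ) : ℝ) / q) ((((i : ℕ) : ℝ) + 1) / q) := by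
    have h0 : 0 ≤ q * x := mul_nonneg hq0.le hx.1
    refine ⟨⟨⌊(q:ℝ) * x⌋₊, ?_⟩, ?_, ?_⟩
    · rw [Nat.floor_lt h0]
      have := hx.2
      nlinarith
    · rw [div_le_iff₀ hq0]
      have := Nat.floor_le h0
      linarith
    · rw [lt_div_iff₀ hq0]
      have := Nat.lt_floor_add_one (q * x)
      push_cast
      linarith
  refine ⟨h.choose, ?_, ?_, ?_⟩
  · have := h.choose_spec.1
    rw [div_le_iff₀ hq0] at this; linarith
  · have := h.choose_spec.2
    rw [lt_div_iff₀ hq0] at this; linarith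
  · rw [rotPerm, dif_pos h]
    field_simp
    ring

lemma rotPerm_mapsTo {q : ℕ} (hq : 2 ≤ q) (π : Equiv.Perm (Fin q)) :
    MapsTo (rotPerm q π) (Ico 0 1) (Ico 0 1) := by
  intro x hx
  obtain ⟨i, h1, h2, h3⟩ := rotPerm_spec hq π hx
  have hq0 : (0:ℝ) < q := by exact_mod_cast (by omega : 0 < q)
  have h4 : (((π i : Fin q) : ℕ) : ℝ) + 1 ≤ q := by exact_mod_cast (π i).2
  have h5 : (0:ℝ) ≤ (((π i : Fin q) : ℕ) : ℝ) := by positivity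
  constructor
  · by_contra h; push Not at h; nlinarith
  · by_contra h; push Not at h; nlinarith

/-- Points with the same cell satisfy the same integer inequalities. -/
lemma le_iff_of_floor {u v : ℝ} (h : ⌊u⌋ = ⌊v⌋) (z : ℤ) : (z:ℝ) ≤ u ↔ (z:ℝ) ≤ v := by
  rw [← Int.le_floor, ← Int.le_floor, h]

lemma fin_unique {q : ℕ} {i j : Fin q} {u v : ℝ} (h1 : ((i:ℕ):ℝ) ≤ u) (h2 : u < ((i:ℕ):ℝ) + 1)
    (h3 : ((j:ℕ):ℝ) ≤ v) (h4 : v < ((j:ℕ):ℝ) + 1) (h : ⌊u⌋ = ⌊v⌋) : i = j := by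
  have a : ⌊u⌋ = ((i:ℕ):ℤ) := Int.floor_eq_iff.2 ⟨by exact_mod_cast h1, by exact_mod_cast h2⟩
  have b : ⌊v⌋ = ((j:ℕ):ℤ) := Int.floor_eq_iff.2 ⟨by exact_mod_cast h3, by exact_mod_cast h4⟩
  apply Fin.ext
  omega

lemma floor_coarse {q n : ℕ} {x y : ℝ}
    (h : ⌊((q * 2 ^ n : ℕ) : ℝ) * x⌋ = ⌊((q * 2 ^ n : ℕ) : ℝ) * y⌋) : ⌊(q:ℝ) * x⌋ = ⌊q * y⌋ := by
  have hp : (0:ℝ) < 2 ^ n := by positivity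
  have key : ∀ {x y : ℝ}, ⌊((q * 2 ^ n : ℕ) : ℝ) * x⌋ = ⌊((q * 2 ^ n : ℕ) : ℝ) * y⌋ →
      ⌊(q:ℝ) * x⌋ ≤ ⌊q * y⌋ := by
    intro x y h
    rw [Int.le_floor]
    have h1 := Int.floor_le (q * x)
    have h2 : ((⌊(q:ℝ) * x⌋ * 2 ^ n : ℤ) : ℝ) ≤ ((q * 2 ^ n : ℕ) : ℝ) * x := by
      push_cast; nlinarith
    rw [le_iff_of_floor h] at h2
    push_cast at h2
    have : (⌊(q:ℝ) * x⌋ : ℝ) * 2 ^ n ≤ (q * y) * 2 ^ n := by linarith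
    exact le_of_mul_le_mul_right this hp
  exact le_antisymm (key h) (key h.symm)

/-- On a cell, `R` is a translation by a grid vector. -/
lemma rotPerm_cell {q : ℕ} (hq : 2 ≤ q) (π : Equiv.Perm (Fin q)) (n : ℕ) {x y : ℝ}
    (hx : x ∈ Ico (0:ℝ) 1) (hy : y ∈ Ico (0:ℝ) 1)
    (h : ⌊((q * 2 ^ n : ℕ) : ℝ) * x⌋ = ⌊((q * 2 ^ n : ℕ) : ℝ) * y⌋) :
    ∃ t : ℤ, ((q * 2 ^ n : ℕ) : ℝ) * rotPerm q π x = ((q * 2 ^ n : ℕ) : ℝ) * x + t ∧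
      ((q * 2 ^ n : ℕ) : ℝ) * rotPerm q π y = ((q * 2 ^ n : ℕ) : ℝ) * y + t := by
  obtain ⟨i, h1, h2, h3⟩ := rotPerm_spec hq π hx
  obtain ⟨j, k1, k2, k3⟩ := rotPerm_spec hq π hy
  obtain rfl : i = j := fin_unique h1 h2 k1 k2 (floor_coarse h)
  refine ⟨2 ^ n * (((π i : Fin q) : ℕ) - ((i:ℕ))), ?_, ?_⟩
  · push_cast
    linear_combination (2:ℝ) ^ n * h3
  · push_cast
    linear_combination (2:ℝ) ^ n * k3

/-- `R` reflects cells as well. -/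
lemma rotPerm_cell_inv {q : ℕ} (hq : 2 ≤ q) (π : Equiv.Perm (Fin q)) (n : ℕ) {x y : ℝ}
    (hx : x ∈ Ico (0:ℝ) 1) (hy : y ∈ Ico (0:ℝ) 1)
    (h : ⌊((q * 2 ^ n : ℕ) : ℝ) * rotPerm q π x⌋ = ⌊((q * 2 ^ n : ℕ) : ℝ) * rotPerm q π y⌋) :
    ∃ t : ℤ, ((q * 2 ^ n : ℕ) : ℝ) * rotPerm q π x = ((q * 2 ^ n : ℕ) : ℝ) * x + t ∧
      ((q * 2 ^ n : ℕ) : ℝ) * rotPerm q π y = ((q * 2 ^ n : ℕ) : ℝ) * y + t := by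
  obtain ⟨i, h1, h2, h3⟩ := rotPerm_spec hq π hx
  obtain ⟨j, k1, k2, k3⟩ := rotPerm_spec hq π hy
  have hij : π i = π j := fin_unique (u := q * rotPerm q π x) (v := q * rotPerm q π y)
    (by linarith) (by linarith) (by linarith) (by linarith) (floor_coarse h)
  obtain rfl : i = j := π.injective hij
  refine ⟨2 ^ n * (((π i : Fin q) : ℕ) - ((i:ℕ))), ?_, ?_⟩
  · push_cast
    linear_combination (2:ℝ) ^ n * h3
  · push_cast
    linear_combination (2:ℝ) ^ n * k3

lemma rotPerm_injOn {q : ℕ} (hq : 2 ≤ q) (π : Equiv.Perm (Fin q)) :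
    InjOn (rotPerm q π) (Ico 0 1) := by
  intro x hx y hy h
  obtain ⟨t, h1, h2⟩ := rotPerm_cell_inv hq π 0 hx hy (by rw [h])
  have hq0 : ((q * 2 ^ 0 : ℕ):ℝ) ≠ 0 := by
    have : q * 2 ^ 0 ≠ 0 := by omega
    exact_mod_cast this
  rw [h] at h1
  exact mul_left_cancel₀ hq0 (by linarith)

lemma vnk_spec {x : ℝ} (hx : x ∈ Ico (0:ℝ) 1) :
    ∃ m : ℕ, 1 - 2 * (2:ℝ)⁻¹ ^ m ≤ x ∧ x < 1 - (2:ℝ)⁻¹ ^ m ∧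
      (∀ n : ℕ, x < 1 - (2:ℝ)⁻¹ ^ n → m ≤ n) ∧ 
      vnk x = x - 1 + 3 * (2:ℝ)⁻¹ ^ m := by
  classical
  have h : ∃ n : ℕ, x < 1 - (2 : ℝ)⁻¹ ^ n := by
    obtain ⟨n, hn⟩ := exists_pow_lt_of_lt_one (by linarith [hx.2] : 0 < 1 - x)
      (by norm_num : (2:ℝ)⁻¹ < 1)
    exact ⟨n, by linarith⟩
  refine ⟨Nat.find h, ?_, Nat.find_spec h, fun n hn => Nat.find_min' h hn, ?_⟩
  · rcases hm : Nat.find h with _ | m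
    · have := hx.1; norm_num; linarith
    · have := Nat.find_min h (m := m) (by omega)
      push Not at this
      rw [pow_succ]; linarith
  · rw [vnk, dif_pos h]

lemma vnk_mapsTo : MapsTo vnk (Ico 0 1) (Ico 0 1) := by
  intro x hx
  obtain ⟨m, h1, h2, -, h3⟩ := vnk_spec hx
  have hp : (0:ℝ) < (2:ℝ)⁻¹ ^ m := by positivity
  have hm : m ≠ 0 := by
    rintro rfl
    have := hx.1
    norm_num at h2; linarith
  obtain ⟨l, rfl⟩ := Nat.exists_eq_succ_of_ne_zero hm
  have hp1 : (2:ℝ)⁻¹ ^ l ≤ 1 := pow_le_one₀ (by norm_num) (by norm_num)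
  rw [Nat.succ_eq_add_one, pow_succ] at *
  constructor
  · linarith
  · linarith

lemma vnk_injOn : InjOn vnk (Ico 0 1) := by
  have key : ∀ x ∈ Ico (0:ℝ) 1, ∀ y ∈ Ico (0:ℝ) 1, vnk x = vnk y →
      ∀ m n : ℕ, x < 1 - (2:ℝ)⁻¹ ^ m → vnk x = x - 1 + 3 * (2:ℝ)⁻¹ ^ m →
      1 - 2 * (2:ℝ)⁻¹ ^ n ≤ y → vnk y = y - 1 + 3 * (2:ℝ)⁻¹ ^ n → ¬ n < m := by
    intro x _ y _ h m n h1 h2 h3 h4 hnm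
    have : (2:ℝ)⁻¹ ^ m ≤ (2:ℝ)⁻¹ ^ (n+1) :=
      pow_le_pow_of_le_one (by norm_num) (by norm_num) hnm
    rw [pow_succ] at this
    linarith
  intro x hx y hy h
  obtain ⟨m, h1, h2, -, h3⟩ := vnk_spec hx
  obtain ⟨n, k1, k2, -, k3⟩ := vnk_spec hy
  have a := key x hx y hy h m n h2 h3 k1 k3
  have b := key y hy x hx h.symm n m k2 k3 h1 h3
  obtain rfl : m = n := by omega
  linarith

lemma pow_split {m n : ℕ} (h : m ≤ n) : (2:ℝ) ^ n * (2:ℝ)⁻¹ ^ m = 2 ^ (n - m) := by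
  obtain ⟨d, rfl⟩ := Nat.exists_eq_add_of_le h
  rw [Nat.add_sub_cancel_left, pow_add, inv_pow]
  field_simp

/-- On a good cell, `a` is a translation by a grid vector. -/
lemma vnk_cell {q : ℕ} (hq : 2 ≤ q) (n : ℕ) {x y : ℝ}
    (hx : x ∈ Ico (0:ℝ) 1) (hy : y ∈ Ico (0:ℝ) 1)
    (h : ⌊((q * 2 ^ n : ℕ) : ℝ) * x⌋ = ⌊((q * 2 ^ n : ℕ) : ℝ) * y⌋)
    (hg : x < 1 - (2:ℝ)⁻¹ ^ n) :
    ∃ t : ℤ, ((q * 2 ^ n : ℕ) : ℝ) * vnk x = ((q * 2 ^ n : ℕ) : ℝ) * x + t ∧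
      ((q * 2 ^ n : ℕ) : ℝ) * vnk y = ((q * 2 ^ n : ℕ) : ℝ) * y + t := by
  have hN : (0:ℝ) < ((q * 2 ^ n : ℕ) : ℝ) := by positivity
  have key : ∀ {x y : ℝ}, ⌊((q * 2 ^ n : ℕ) : ℝ) * x⌋ = ⌊((q * 2 ^ n : ℕ) : ℝ) * y⌋ →
      ∀ m : ℕ, m ≤ n → x < 1 - (2:ℝ)⁻¹ ^ m → y < 1 - (2:ℝ)⁻¹ ^ m := by
    intro x y h m hm hlt
    by_contra hcon
    push Not at hcon
    have e : ((q * 2 ^ n : ℕ) : ℝ) * (1 - (2:ℝ)⁻¹ ^ m) = ((q * 2 ^ n - q * 2 ^ (n - m) : ℤ) : ℝ) := by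
      push_cast
      rw [← pow_split hm]; ring
    have h1 := mul_le_mul_of_nonneg_left hcon hN.le
    rw [e, ← le_iff_of_floor h, ← e] at h1
    exact absurd (le_of_mul_le_mul_left h1 hN) (not_le.2 hlt)
  obtain ⟨m, h1, h2, h3, h4⟩ := vnk_spec hx
  obtain ⟨l, k1, k2, k3, k4⟩ := vnk_spec hy
  have hmn := h3 n hg
  have hlm := k3 m (key h m hmn h2)
  have hml := h3 l (key h.symm l (hlm.trans hmn) k2)
  obtain rfl : m = l := le_antisymm hml hlm
  refine ⟨-(q * 2 ^ n) + 3 * q * 2 ^ (n - m), ?_, ?_⟩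
  · rw [h4]; push_cast; rw [← pow_split hmn]; ring
  · rw [k4]; push_cast; rw [← pow_split hmn]; ring

lemma floor_translate {u v u' v' : ℝ} {t : ℤ} (h : ⌊u⌋ = ⌊v⌋) (hu : u' = u + t) (hv : v' = v + t) :
    ⌊u'⌋ = ⌊v'⌋ := by
  rw [hu, hv, Int.floor_add_intCast, Int.floor_add_intCast, h]

lemma rotOdo_mapsTo {q : ℕ} (hq : 2 ≤ q) (π : Equiv.Perm (Fin q)) :
    MapsTo (rotOdo q π) (Ico 0 1) (Ico 0 1) := fun _ hx => vnk_mapsTo (rotPerm_mapsTo hq π hx)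

lemma rotOdo_injOn {q : ℕ} (hq : 2 ≤ q) (π : Equiv.Perm (Fin q)) :
    InjOn (rotOdo q π) (Ico 0 1) := by
  intro x hx y hy h
  exact rotPerm_injOn hq π hx hy (vnk_injOn (rotPerm_mapsTo hq π hx) (rotPerm_mapsTo hq π hy) h)

lemma rotOdo_cell {q : ℕ} (hq : 2 ≤ q) (π : Equiv.Perm (Fin q)) (n : ℕ) {x y : ℝ}
    (hx : x ∈ Ico (0:ℝ) 1) (hy : y ∈ Ico (0:ℝ) 1)
    (h : ⌊((q * 2 ^ n : ℕ) : ℝ) * x⌋ = ⌊((q * 2 ^ n : ℕ) : ℝ) * y⌋)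
    (hg : rotPerm q π x < 1 - (2:ℝ)⁻¹ ^ n) :
    ∃ t : ℤ, ((q * 2 ^ n : ℕ) : ℝ) * rotOdo q π x = ((q * 2 ^ n : ℕ) : ℝ) * x + t ∧
      ((q * 2 ^ n : ℕ) : ℝ) * rotOdo q π y = ((q * 2 ^ n : ℕ) : ℝ) * y + t := by
  obtain ⟨t, h1, h2⟩ := rotPerm_cell hq π n hx hy h
  obtain ⟨s, h3, h4⟩ := vnk_cell hq n (rotPerm_mapsTo hq π hx) (rotPerm_mapsTo hq π hy)
    (floor_translate h h1 h2) hg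
  refine ⟨t + s, ?_, ?_⟩
  · rw [rotOdo, h3, h1]; push_cast; ring
  · rw [rotOdo, h4, h2]; push_cast; ring

/-- The preimage of the image of a good cell is that cell. -/
lemma preimage_cell {q : ℕ} (hq : 2 ≤ q) (π : Equiv.Perm (Fin q)) (n : ℕ) {x : ℝ}
    (hx : x ∈ Ico (0:ℝ) 1) (hg : rotPerm q π x < 1 - (2:ℝ)⁻¹ ^ n) :
    rotOdo q π ⁻¹' (cell q n ⌊((q * 2 ^ n : ℕ) : ℝ) * rotOdo q π x⌋) ∩ Ico 0 1 =
      cell q n ⌊((q * 2 ^ n : ℕ) : ℝ) * x⌋ := by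
  have hN : (0:ℝ) < ((q * 2 ^ n : ℕ) : ℝ) := by positivity
  ext z
  constructor
  · rintro ⟨⟨hz1, hz2⟩, hz⟩
    obtain ⟨t, ht, -⟩ := rotOdo_cell hq π n hx hx rfl hg
    set y : ℝ := rotOdo q π z - t / ((q * 2 ^ n : ℕ) : ℝ) with hy
    have hNy : ((q * 2 ^ n : ℕ) : ℝ) * y = ((q * 2 ^ n : ℕ) : ℝ) * rotOdo q π z + ((-t : ℤ) : ℝ) := by
      rw [hy, mul_sub, mul_div_cancel₀ _ hN.ne']; push_cast; ring
    have hf : ⌊((q * 2 ^ n : ℕ) : ℝ) * x⌋ = ⌊((q * 2 ^ n : ℕ) : ℝ) * y⌋ :=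
      floor_translate hz2.symm (by rw [ht]; push_cast; ring) hNy
    have hy01 : y ∈ Ico (0:ℝ) 1 := by
      constructor
      · have : ((0:ℤ):ℝ) ≤ ((q * 2 ^ n : ℕ) : ℝ) * x := by
          push_cast; have := hx.1; positivity
        rw [le_iff_of_floor hf] at this
        push_cast at this hN
        by_contra hcon
        push Not at hcon
        nlinarith
      · by_contra hcon
        push Not at hcon
        have : (((q * 2 ^ n : ℕ) : ℤ):ℝ) ≤ ((q * 2 ^ n : ℕ) : ℝ) * y := by
          rw [Int.cast_natCast]; nlinarith
        rw [← le_iff_of_floor hf, Int.cast_natCast] at this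
        have := hx.2
        nlinarith
    obtain ⟨s, hs1, hs2⟩ := rotOdo_cell hq π n hx hy01 hf hg
    have hFy : rotOdo q π y = rotOdo q π z := by
      apply mul_left_cancel₀ hN.ne'
      have : (s:ℝ) = t := by linarith
      rw [hs2, hNy, this]; push_cast; ring
    have := rotOdo_injOn hq π hy01 hz hFy
    rw [← this]
    exact ⟨hy01, hf.symm⟩
  · rintro ⟨hz, hz2⟩
    obtain ⟨s, hs1, hs2⟩ := rotOdo_cell hq π n hx hz hz2.symm hg
    exact ⟨⟨rotOdo_mapsTo hq π hz, floor_translate hz2 hs2 hs1⟩, hz⟩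

/-- A bad cell is the preimage under `R` of one of the last `q` cells. -/
lemma bad_cell {q : ℕ} (hq : 2 ≤ q) (π : Equiv.Perm (Fin q)) (n : ℕ) {x : ℝ}
    (hx : x ∈ Ico (0:ℝ) 1) (hg : 1 - (2:ℝ)⁻¹ ^ n ≤ rotPerm q π x) :
    ∃ b : Fin q, cell q n ⌊((q * 2 ^ n : ℕ) : ℝ) * x⌋ =
      rotPerm q π ⁻¹' (cell q n ((q * 2 ^ n : ℤ) - q + (b : ℕ))) ∩ Ico 0 1 := by
  have hN : (0:ℝ) < ((q * 2 ^ n : ℕ) : ℝ) := by positivity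
  have h1 : (q * 2 ^ n : ℤ) - q ≤ ⌊((q * 2 ^ n : ℕ) : ℝ) * rotPerm q π x⌋ := by
    rw [Int.le_floor]
    have := mul_le_mul_of_nonneg_left hg hN.le
    have e := pow_split (le_refl n)
    push_cast at *
    rw [Nat.sub_self, pow_zero] at e
    nlinarith
  have h2 : ⌊((q * 2 ^ n : ℕ) : ℝ) * rotPerm q π x⌋ < (q * 2 ^ n : ℤ) := by
    rw [Int.floor_lt]
    have := (rotPerm_mapsTo hq π hx).2
    push_cast at *
    nlinarith
  refine ⟨⟨(⌊((q * 2 ^ n : ℕ) : ℝ) * rotPerm q π x⌋ - ((q * 2 ^ n : ℤ) - q)).toNat, ?_⟩, ?_⟩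
  · rw [Int.toNat_lt (by linarith)]; linarith
  · simp only []
    rw [Int.toNat_of_nonneg (by linarith), add_sub_cancel]
    ext z
    constructor
    · rintro ⟨hz, hz2⟩
      obtain ⟨s, hs1, hs2⟩ := rotPerm_cell hq π n hx hz hz2.symm
      exact ⟨⟨rotPerm_mapsTo hq π hz, floor_translate hz2 hs2 hs1⟩, hz⟩
    · rintro ⟨⟨hz1, hz2⟩, hz⟩
      obtain ⟨s, hs1, hs2⟩ := rotPerm_cell_inv hq π n hx hz hz2.symm
      refine ⟨hz, floor_translate (t := -s) hz2 ?_ ?_⟩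
      · rw [hs2]; push_cast; ring
      · rw [hs1]; push_cast; ring

/-- A cell whose orbit never meets the bad set consists of periodic points. -/
lemma periodic_cell {q : ℕ} (hq : 2 ≤ q) (π : Equiv.Perm (Fin q)) (n : ℕ) {x : ℝ}
    (hx : x ∈ Ico (0:ℝ) 1) (hg : ∀ m : ℕ, rotPerm q π ((rotOdo q π)^[m] x) < 1 - (2:ℝ)⁻¹ ^ n) :
    cell q n ⌊((q * 2 ^ n : ℕ) : ℝ) * x⌋ ⊆
      {x ∈ Set.Ico (0 : ℝ) 1 | ∃ n : ℕ, 1 ≤ n ∧ (rotOdo q π)^[n] x = x} := by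
  have hN : (0:ℝ) < ((q * 2 ^ n : ℕ) : ℝ) := by positivity
  have hmaps : ∀ m, MapsTo (rotOdo q π)^[m] (Ico 0 1) (Ico 0 1) :=
    fun m => (rotOdo_mapsTo hq π).iterate m
  have key : ∀ y ∈ cell q n ⌊((q * 2 ^ n : ℕ) : ℝ) * x⌋, ∀ m : ℕ, ∃ t : ℤ,
      ((q * 2 ^ n : ℕ) : ℝ) * (rotOdo q π)^[m] x = ((q * 2 ^ n : ℕ) : ℝ) * x + t ∧
      ((q * 2 ^ n : ℕ) : ℝ) * (rotOdo q π)^[m] y = ((q * 2 ^ n : ℕ) : ℝ) * y + t := by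
    rintro y ⟨hy, hy2⟩ m
    induction m with
    | zero => exact ⟨0, by simp, by simp⟩
    | succ m ih =>
      obtain ⟨t, h1, h2⟩ := ih
      obtain ⟨s, h3, h4⟩ := rotOdo_cell hq π n (hmaps m hx) (hmaps m hy)
        (floor_translate hy2.symm h1 h2) (hg m)
      refine ⟨t + s, ?_, ?_⟩
      · rw [Function.iterate_succ_apply', h3, h1]; push_cast; ring
      · rw [Function.iterate_succ_apply', h4, h2]; push_cast; ring
  -- pigeonhole
  have hper : ∃ d, 1 ≤ d ∧ (rotOdo q π)^[d] x = x := by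
    have hfin : (Ico (0:ℤ) ((q * 2 ^ n : ℕ):ℤ)).Finite := Set.finite_Ico _ _
    have hmt : ∀ m : ℕ, ⌊((q * 2 ^ n : ℕ) : ℝ) * (rotOdo q π)^[m] x⌋ ∈ Ico (0:ℤ) ((q * 2 ^ n : ℕ):ℤ) := by
      intro m
      have hm := hmaps m hx
      constructor
      · apply Int.floor_nonneg.2
        have := hm.1
        positivity
      · rw [Int.floor_lt, Int.cast_natCast]
        have := hm.2
        nlinarith
    obtain ⟨m1, m2, hlt, heq⟩ := hfin.exists_lt_map_eq_of_forall_mem hmt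
    obtain ⟨t1, ht1, -⟩ := key x ⟨hx, rfl⟩ m1
    obtain ⟨t2, ht2, -⟩ := key x ⟨hx, rfl⟩ m2
    simp only [ht1, ht2, Int.floor_add_intCast] at heq
    have ht : t1 = t2 := by linarith
    have h12 : (rotOdo q π)^[m1] x = (rotOdo q π)^[m2] x := by
      apply mul_left_cancel₀ hN.ne'
      rw [ht1, ht2, ht]
    refine ⟨m2 - m1, by omega, ?_⟩
    have hinj : InjOn (rotOdo q π)^[m1] (Ico 0 1) := (rotOdo_injOn hq π).iterate (rotOdo_mapsTo hq π) m1
    apply hinj (hmaps _ hx) hx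
    rw [← Function.iterate_add_apply, h12]
    congr 2
    omega
  obtain ⟨d, hd, hdx⟩ := hper
  intro y hy
  refine ⟨hy.1, d, hd, ?_⟩
  obtain ⟨t, h1, h2⟩ := key y hy d
  rw [hdx] at h1
  apply mul_left_cancel₀ hN.ne'
  linarith

lemma vnk_measurable : Measurable vnk := by
  classical
  have hp : ∀ x : ℝ, ∃ n : ℕ, x < 1 - (2:ℝ)⁻¹ ^ n ∨ ¬ ∃ n : ℕ, x < 1 - (2:ℝ)⁻¹ ^ n := by
    intro x
    by_cases h : ∃ n : ℕ, x < 1 - (2:ℝ)⁻¹ ^ n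
    · exact h.imp fun n hn => Or.inl hn
    · exact ⟨0, Or.inr h⟩
  have hE : MeasurableSet {x : ℝ | ∃ n : ℕ, x < 1 - (2:ℝ)⁻¹ ^ n} := by
    have : {x : ℝ | ∃ n : ℕ, x < 1 - (2:ℝ)⁻¹ ^ n} = ⋃ n : ℕ, Iio (1 - (2:ℝ)⁻¹ ^ n) := by
      ext x; simp
    rw [this]
    exact MeasurableSet.iUnion fun n => measurableSet_Iio
  have hm := measurable_find hp (fun k : ℕ => (measurableSet_Iio (a := 1 - (2:ℝ)⁻¹ ^ k)).union hE.compl)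
  have e : vnk = {x : ℝ | ∃ n : ℕ, x < 1 - (2:ℝ)⁻¹ ^ n}.indicator
      (fun x => x - 1 + 3 * (2:ℝ)⁻¹ ^ (Nat.find (hp x))) := by
    funext x
    by_cases h : ∃ n : ℕ, x < 1 - (2:ℝ)⁻¹ ^ n
    · rw [indicator_of_mem (by exact h), vnk, dif_pos h]
      congr 3
      rw [Nat.find_eq_iff]
      refine ⟨?_, fun m hmlt => ?_⟩
      · rcases Nat.find_spec (hp x) with h1 | h1
        · exact h1
        · exact absurd h h1
      · have := Nat.find_min (hp x) hmlt
        tauto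
    · rw [indicator_of_notMem (by exact h), vnk, dif_neg h]
  rw [e]
  apply Measurable.indicator _ hE
  have : Measurable (fun k : ℕ => (2:ℝ)⁻¹ ^ k) := measurable_from_top
  exact (measurable_id.sub_const 1).add ((this.comp hm).const_mul 3)

lemma rotPerm_measurable {q : ℕ} (hq : 2 ≤ q) (π : Equiv.Perm (Fin q)) :
    Measurable (rotPerm q π) := by
  classical
  have hq0 : (0:ℝ) < q := by exact_mod_cast (by omega : 0 < q)
  let g : ℤ → ℝ := fun z => if h : ∃ i : Fin q, ((i:ℕ):ℤ) = z then
    ((((π h.choose : Fin q) : ℕ) : ℝ) - (((h.choose : Fin q) : ℕ) : ℝ)) / q else 0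
  have e : rotPerm q π = fun x => x + g ⌊(q:ℝ) * x⌋ := by
    funext x
    have hiff : ∀ i : Fin q, x ∈ Set.Ico (((i : ℕ) : ℝ) / q) ((((i : ℕ) : ℝ) + 1) / q) ↔
        ((i:ℕ):ℤ) = ⌊(q:ℝ) * x⌋ := by
      intro i
      rw [eq_comm, Int.floor_eq_iff, mem_Ico, div_le_iff₀ hq0, lt_div_iff₀ hq0, mul_comm x]
      push_cast
      rfl
    simp only [rotPerm, g]
    by_cases h : ∃ i : Fin q, x ∈ Set.Ico (((i : ℕ) : ℝ) / q) ((((i : ℕ) : ℝ) + 1) / q)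
    · have h' : ∃ i : Fin q, ((i:ℕ):ℤ) = ⌊(q:ℝ) * x⌋ := by simpa only [hiff] using h
      have : h.choose = h'.choose := by
        apply Fin.ext
        have a := (hiff _).1 h.choose_spec
        have b := h'.choose_spec
        omega
      rw [dif_pos h, dif_pos h', this]
    · have h' : ¬ ∃ i : Fin q, ((i:ℕ):ℤ) = ⌊(q:ℝ) * x⌋ := by simpa only [hiff] using h
      rw [dif_neg h, dif_neg h', add_zero]
  rw [e]
  have hg : Measurable g := measurable_from_top
  exact measurable_id.add (hg.comp (Int.measurable_floor.comp (measurable_const_mul _)))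

lemma rotOdo_measurable {q : ℕ} (hq : 2 ≤ q) (π : Equiv.Perm (Fin q)) :
    Measurable (rotOdo q π) := vnk_measurable.comp (rotPerm_measurable hq π)

lemma real_inter (μ : Measure ℝ) (h01 : μ (Ico (0:ℝ) 1)ᶜ = 0) (B : Set ℝ) :
    μ.real (B ∩ Ico 0 1) = μ.real B := by
  unfold Measure.real
  rw [measure_inter_conull' (measure_mono_null (fun x hx => hx.2) h01)]

/-- A combination of invariant aperiodic measures vanishing on the bad cells vanishes on all
cells of that level. -/
lemma level_zero {ι : Type*} [Fintype ι] {q : ℕ} (hq : 2 ≤ q) (π : Equiv.Perm (Fin q))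
    (μ : ι → Measure ℝ) (hμ : ∀ i, μ i ∈ ergAperiodicMeasures q π) (n : ℕ) (c : ι → ℝ)
    (hc : ∀ b : Fin q, ∑ i, c i * (μ i).real
      (rotPerm q π ⁻¹' (cell q n ((q * 2 ^ n : ℤ) - q + (b : ℕ))) ∩ Ico 0 1) = 0) (k : ℤ) :
    ∑ i, c i * (μ i).real (cell q n k) = 0 := by
  by_cases hk : (cell q n k).Nonempty
  swap
  · rw [not_nonempty_iff_eq_empty] at hk
    simp [hk]
  obtain ⟨x, hx, rfl⟩ := hk
  by_cases hg : ∀ m : ℕ, rotPerm q π ((rotOdo q π)^[m] x) < 1 - (2:ℝ)⁻¹ ^ n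
  · apply Finset.sum_eq_zero
    intro i _
    have : μ i (cell q n ⌊((q * 2 ^ n : ℕ) : ℝ) * x⌋) = 0 :=
      measure_mono_null (periodic_cell hq π n hx hg) (hμ i).2.2.2.2
    rw [Measure.real, this, ENNReal.toReal_zero, mul_zero]
  · push Not at hg
    obtain ⟨m, hm⟩ := hg
    induction m generalizing x with
    | zero =>
      obtain ⟨b, hb⟩ := bad_cell hq π n hx hm
      rw [hb]; exact hc b
    | succ m ih =>
      by_cases hb : rotPerm q π x < 1 - (2:ℝ)⁻¹ ^ n
      · have := ih (rotOdo q π x) (rotOdo_mapsTo hq π hx) hm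
        rw [← this]
        apply Finset.sum_congr rfl
        intro i _
        congr 1
        rw [← preimage_cell hq π n hx hb, real_inter _ (hμ i).2.1]
        unfold Measure.real
        rw [(hμ i).2.2.1 _ (cell_measurable _ _ _)]
      · obtain ⟨b, hb⟩ := bad_cell hq π n hx (not_lt.1 hb)
        rw [hb]; exact hc b

/-- The annihilator of the cells of level `n`. -/
def ann {q r : ℕ} (μ : Fin r → Measure ℝ) (n : ℕ) : Submodule ℝ (Fin r → ℝ) where
  carrier := {c | ∀ k, ∑ i, c i * (μ i).real (cell q n k) = 0}
  zero_mem' := by intro k; simp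
  add_mem' := by
    intro a b ha hb k
    have := ha k
    have := hb k
    simp only [Pi.add_apply, add_mul, Finset.sum_add_distrib]
    linarith
  smul_mem' := by
    intro a b hb k
    simp only [Pi.smul_apply, smul_eq_mul, mul_assoc, ← Finset.mul_sum]
    rw [hb k, mul_zero]

lemma ann_ne_bot {q : ℕ} (hq : 2 ≤ q) (π : Equiv.Perm (Fin q))
    (μ : Fin (q+1) → Measure ℝ) (hμ : ∀ i, μ i ∈ ergAperiodicMeasures q π) (n : ℕ) :
    ann (q := q) μ n ≠ ⊥ := by
  let L : (Fin (q+1) → ℝ) →ₗ[ℝ] (Fin q → ℝ) :=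
    LinearMap.pi fun b => ∑ i, (μ i).real
      (rotPerm q π ⁻¹' (cell q n ((q * 2 ^ n : ℤ) - q + (b : ℕ))) ∩ Ico 0 1) •
        (LinearMap.proj i : (Fin (q+1) → ℝ) →ₗ[ℝ] ℝ)
  have hL : LinearMap.ker L ≠ ⊥ := L.ker_ne_bot_of_finrank_lt (by simp)
  obtain ⟨c, hc, hc0⟩ := Submodule.exists_mem_ne_zero_of_ne_bot hL
  rw [Submodule.ne_bot_iff]
  refine ⟨c, ?_, hc0⟩
  intro k
  apply level_zero hq π μ hμ n c _ k
  intro b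
  have := congrFun (LinearMap.mem_ker.1 hc) b
  simp only [L, LinearMap.pi_apply, LinearMap.sum_apply, LinearMap.smul_apply, LinearMap.proj_apply,
    smul_eq_mul, Pi.zero_apply] at this
  refine Eq.trans ?_ this
  exact Finset.sum_congr rfl fun i _ => mul_comm _ _

lemma ann_anti {q r : ℕ} (μ : Fin r → Measure ℝ) [∀ i, IsProbabilityMeasure (μ i)] (n : ℕ) :
    ann (q := q) μ (n+1) ≤ ann (q := q) μ n := by
  intro c hc k
  have h1 := hc (2*k)
  have h2 := hc (2*k+1)
  have e : ∀ i, (μ i).real (cell q n k) =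
      (μ i).real (cell q (n+1) (2*k)) + (μ i).real (cell q (n+1) (2*k+1)) := by
    intro i
    rw [cell_split]
    exact measureReal_union (cell_disj q (n+1) (by omega)) (cell_measurable _ _ _)
  simp only [e, mul_add, Finset.sum_add_distrib, h1, h2, add_zero]

/-- There is no injective family of `q + 1` such measures. -/
lemma no_family {q : ℕ} (hq : 2 ≤ q) (π : Equiv.Perm (Fin q))
    (μ : Fin (q+1) → Measure ℝ) (hinj : Function.Injective μ)
    (hμ : ∀ i, μ i ∈ ergAperiodicMeasures q π) : False := by
  have : ∀ i, IsProbabilityMeasure (μ i) := fun i => (hμ i).1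
  have hanti : Antitone (fun n => ann (q := q) μ n) := antitone_nat_of_succ_le (ann_anti μ)
  obtain ⟨n, hn⟩ := IsArtinian.monotone_stabilizes
    (⟨fun n => OrderDual.toDual (ann (q := q) μ n), fun a b h => hanti h⟩ :
      ℕ →o (Submodule ℝ (Fin (q+1) → ℝ))ᵒᵈ)
  obtain ⟨c, hc, hc0⟩ := Submodule.exists_mem_ne_zero_of_ne_bot (ann_ne_bot hq π μ hμ n)
  have hall : ∀ m, c ∈ ann (q := q) μ m := by
    intro m
    rcases le_total n m with h | h
    · have : ann (q := q) μ n = ann (q := q) μ m := hn m h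
      rwa [← this]
    · exact hanti h hc
  have herg : ∀ i, Ergodic (rotOdo q π) (μ i) := by
    intro i
    refine ⟨⟨rotOdo_measurable hq π, ?_⟩, ⟨?_⟩⟩
    · ext A hA
      rw [Measure.map_apply (rotOdo_measurable hq π) hA]
      exact (hμ i).2.2.1 A hA
    · intro s hs hs'
      rw [eventuallyConst_set']
      rcases (hμ i).2.2.2.1 s hs hs' with h | h
      · left; exact ae_eq_empty.2 h
      · right; rw [ae_eq_univ, prob_compl_eq_zero_iff hs]; exact h
  exact hc0 (coeff_zero μ
    (fun i j hij => ergodic_mutuallySingular (herg i) (herg j) (fun h => hij (hinj h))) c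
    (comb_zero q hq μ (fun i => (hμ i).2.1) c (fun n k => hall n k)))

end RotOdo

/-- the aperiodic part of the rotated odometer admits at most `q` ergodic
invariant Borel probability measures. -/
theorem rotOdo_at_most_q_ergodic_measures (q : ℕ) (hq : 2 ≤ q) (π : Equiv.Perm (Fin q)) :
    (ergAperiodicMeasures q π).Finite ∧ (ergAperiodicMeasures q π).ncard ≤ q := by
  have h : (ergAperiodicMeasures q π).encard ≤ (q : ℕ∞) := by
    by_contra hcon
    push Not at hcon
    have hle : ((q + 1 : ℕ) : ℕ∞) ≤ (ergAperiodicMeasures q π).encard := by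
      push_cast
      exact Order.add_one_le_of_lt hcon
    obtain ⟨t, ht, htc⟩ := Set.exists_subset_encard_eq hle
    have hfin : t.Finite := Set.finite_of_encard_eq_coe htc
    have := hfin.to_subtype
    have hcard : Nat.card t = q + 1 := by
      rw [Nat.card_coe_set_eq, Set.ncard_def, htc]; rfl
    let e := (Finite.equivFinOfCardEq hcard).symm
    exact RotOdo.no_family hq π (fun i => (e i : MeasureTheory.Measure ℝ))
      (Subtype.val_injective.comp e.injective) (fun i => ht (e i).2)
  have hfin : (ergAperiodicMeasures q π).Finite := Set.finite_of_encard_le_coe h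
  refine ⟨hfin, ?_⟩
  rw [← hfin.cast_ncard_eq] at h
  exact_mod_cast h
end

section
/- Let (a_n)_{n≥1} and (b_n)_{n≥1} be the integer sequences defined by a_1 = b_1 = 1, a_{n+1} = 2(a_n + b_n) and b_{n+1} = 3·a_n. Then for every m ≥ 1 there exists N ∈ ℕ such that for all n ≥ N, 2^m divides a_n and 2^m divides b_n. -/
/-- for the integer sequences with `a 1 = b 1 = 1`,
`a (n+1) = 2(a n + b n)`, `b (n+1) = 3 a n` (for `n ≥ 1`), every power `2^m` eventually
divides all `a n` and `b n`. -/
theorem heights_eventually_divisible_by_two_pow (a b : ℕ → ℤ)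
    (ha1 : a 1 = 1) (hb1 : b 1 = 1)
    (ha : ∀ n : ℕ, 1 ≤ n → a (n + 1) = 2 * (a n + b n))
    (hb : ∀ n : ℕ, 1 ≤ n → b (n + 1) = 3 * a n) :
    ∀ m : ℕ, 1 ≤ m → ∃ N : ℕ, ∀ n : ℕ, N ≤ n →
      (2 ^ m : ℤ) ∣ a n ∧ (2 ^ m : ℤ) ∣ b n := by
  have key : ∀ m n : ℕ, 2 * m + 1 ≤ n → (2 ^ m : ℤ) ∣ a n ∧ (2 ^ m : ℤ) ∣ b n := by
    intro m
    induction m with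
    | zero => intro n _; simp
    | succ m ih =>
      intro n hn
      obtain ⟨k, rfl⟩ : ∃ k, n = k + 1 + 1 := ⟨n - 2, by omega⟩
      obtain ⟨⟨x, hx⟩, ⟨y, hy⟩⟩ := ih k (by omega)
      obtain ⟨⟨z, hz⟩, ⟨w, hw⟩⟩ := ih (k + 1) (by omega)
      refine ⟨⟨z + w, ?_⟩, ⟨3 * (x + y), ?_⟩⟩
      · rw [ha (k + 1) (by omega), hz, hw]; ring
      · rw [hb (k + 1) (by omega), ha k (by omega), hx, hy]; ring
  intro m _
  exact ⟨2 * m + 1, key m⟩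
end

section
/- Let (a_n)_{n≥1} and (b_n)_{n≥1} be the integer sequences defined by a_1 = b_1 = 1, a_{n+1} = 3a_n + 2b_n and b_{n+1} = 2a_n + b_n. Then for every n ≥ 1: a_n = F(3n−1) and b_n = F(3n−2), where F denotes the Fibonacci sequence (F(1) = F(2) = 1, F(k+2) = F(k+1) + F(k)), and gcd(a_n, b_n) = 1. -/
/-- for the integer sequences with `a 1 = b 1 = 1`,
`a (n+1) = 3 a n + 2 b n`, `b (n+1) = 2 a n + b n` (for `n ≥ 1`), one has
`a n = F (3n - 1)`, `b n = F (3n - 2)` (Fibonacci numbers) and `gcd (a n) (b n) = 1`. -/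
theorem heights_fibonacci_and_coprime (a b : ℕ → ℤ)
    (ha1 : a 1 = 1) (hb1 : b 1 = 1)
    (ha : ∀ n : ℕ, 1 ≤ n → a (n + 1) = 3 * a n + 2 * b n)
    (hb : ∀ n : ℕ, 1 ≤ n → b (n + 1) = 2 * a n + b n) :
    ∀ n : ℕ, 1 ≤ n →
      a n = (Nat.fib (3 * n - 1) : ℤ) ∧ b n = (Nat.fib (3 * n - 2) : ℤ) ∧
      Int.gcd (a n) (b n) = 1 := by
  have key : ∀ m : ℕ, a (m + 1) = (Nat.fib (3 * m + 2) : ℤ) ∧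
      b (m + 1) = (Nat.fib (3 * m + 1) : ℤ) := by
    intro m
    induction m with
    | zero => simp [ha1, hb1]
    | succ k ih =>
      obtain ⟨h1, h2⟩ := ih
      have e3 := Nat.fib_add_two (n := 3 * k + 1)
      have e4 := Nat.fib_add_two (n := 3 * k + 2)
      have e5 := Nat.fib_add_two (n := 3 * k + 3)
      rw [ha (k + 1) (by omega), hb (k + 1) (by omega), h1, h2,
        show 3 * (k + 1) + 2 = 3 * k + 5 by ring, show 3 * (k + 1) + 1 = 3 * k + 4 by ring]
      simp only [add_assoc, Nat.reduceAdd] at e3 e4 e5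
      constructor <;> omega
  intro n hn
  obtain ⟨m, rfl⟩ : ∃ m, n = m + 1 := ⟨n - 1, by omega⟩
  obtain ⟨h1, h2⟩ := key m
  rw [h1, h2, show 3 * (m + 1) - 1 = 3 * m + 2 by omega,
    show 3 * (m + 1) - 2 = 3 * m + 1 by omega]
  refine ⟨rfl, rfl, ?_⟩
  rw [Int.gcd_natCast_natCast]
  exact (Nat.fib_coprime_fib_succ (3 * m + 1)).symm
end

section
/- Let (a_n), (b_n), (c_n) for n ≥ 1 be the integer sequences defined by a_1 = b_1 = c_1 = 1, a_{n+1} = 3a_n + 2b_n, b_{n+1} = 2a_n + b_n, and c_{n+1} = 6a_n + 10b_n + 8c_n. Then for every n ≥ 2: 4 divides c_n, and 8 divides c_n if and only if n is even. -/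
/-- for the integer sequences with `a 1 = b 1 = c 1 = 1`,
`a (n+1) = 3 a n + 2 b n`, `b (n+1) = 2 a n + b n`, `c (n+1) = 6 a n + 10 b n + 8 c n`
(for `n ≥ 1`), for every `n ≥ 2` one has `4 ∣ c n`, and `8 ∣ c n` iff `n` is even. -/
theorem c_divisibility_pattern (a b c : ℕ → ℤ)
    (ha1 : a 1 = 1) (hb1 : b 1 = 1) (hc1 : c 1 = 1)
    (ha : ∀ n : ℕ, 1 ≤ n → a (n + 1) = 3 * a n + 2 * b n)
    (hb : ∀ n : ℕ, 1 ≤ n → b (n + 1) = 2 * a n + b n)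
    (hc : ∀ n : ℕ, 1 ≤ n → c (n + 1) = 6 * a n + 10 * b n + 8 * c n) :
    ∀ n : ℕ, 2 ≤ n → (4 ∣ c n) ∧ ((8 ∣ c n) ↔ Even n) := by
  have key : ∀ n : ℕ, 1 ≤ n → a n % 4 = 1 ∧
      ((n % 2 = 1 ∧ b n % 4 = 1) ∨ (n % 2 = 0 ∧ b n % 4 = 3)) := by
    intro n hn
    induction n, hn using Nat.le_induction with
    | base => rw [ha1, hb1]; norm_num
    | succ k hk ih =>
      have h1 := ha k hk
      have h2 := hb k hk
      omega
  intro n hn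
  obtain ⟨k, rfl⟩ : ∃ k, n = k + 1 := ⟨n - 1, by omega⟩
  have hk : 1 ≤ k := by omega
  have h3 := hc k hk
  have h4 := key k hk
  rw [Nat.even_iff]
  omega
end

section
/- For every nonzero integer v there exist infinitely many n ∈ ℕ such that the distance from 5·v·8^n·√5 to the nearest integer is greater than 1/16; that is, for infinitely many n, |5·v·8^n·√5 − m| > 1/16 for every integer m. In particular, the distance from 5·v·8^n·√5 to ℤ does not tend to 0 as n → ∞. -/
/-- for every nonzero integer `v` there are infinitely many `n` such that the
distance from `5·v·8^n·√5` to the nearest integer exceeds `1/16`; in particular this distance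
does not tend to `0`. -/
theorem dist_to_int_not_tendsto_zero (v : ℤ) (hv : v ≠ 0) :
    {n : ℕ | ∀ m : ℤ, (1 : ℝ) / 16 < |5 * (v : ℝ) * 8 ^ n * Real.sqrt 5 - (m : ℝ)|}.Infinite ∧
    ¬ Filter.Tendsto
        (fun n : ℕ => ⨅ m : ℤ, |5 * (v : ℝ) * 8 ^ n * Real.sqrt 5 - (m : ℝ)|)
        Filter.atTop (nhds 0) := by
  have key : {n : ℕ | ∀ m : ℤ,
      (1 : ℝ) / 16 < |5 * (v : ℝ) * 8 ^ n * Real.sqrt 5 - (m : ℝ)|}.Infinite := by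
    intro hfin
    obtain ⟨N, hN⟩ := hfin.bddAbove
    have h : ∀ n, N < n → ∃ m : ℤ,
        |5 * (v : ℝ) * 8 ^ n * Real.sqrt 5 - (m : ℝ)| ≤ 1 / 16 := by
      intro n hn
      by_contra hc
      push Not at hc
      exact absurd (hN hc) (by omega)
    obtain ⟨m, hm⟩ := h (N + 1) (by omega)
    set x : ℝ := 5 * (v : ℝ) * 8 ^ (N + 1) * Real.sqrt 5 with hx
    have hk : ∀ k : ℕ, |8 ^ k * (x - m)| ≤ 1 / 16 := by
      intro k
      induction k with
      | zero => simpa using hm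
      | succ k ih =>
        obtain ⟨m', hm'⟩ := h (N + 1 + (k + 1)) (by omega)
        have e : 5 * (v : ℝ) * 8 ^ (N + 1 + (k + 1)) * Real.sqrt 5 = 8 ^ (k + 1) * x := by
          rw [hx, pow_add 8 (N + 1) (k + 1)]; ring
        rw [e] at hm'
        have hz : m' - 8 ^ (k + 1) * m = 0 := by
          rw [← Int.abs_lt_one_iff]
          have : |((m' - 8 ^ (k + 1) * m : ℤ) : ℝ)| < 1 := by
            push_cast
            rw [abs_le] at ih hm'
            rw [abs_lt]
            rw [pow_succ] at hm' ⊢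
            constructor <;> linarith [ih.1, ih.2, hm'.1, hm'.2]
          exact_mod_cast this
        have hz' : (m' : ℝ) = 8 ^ (k + 1) * m := by
          have : m' = 8 ^ (k + 1) * m := by linarith
          exact_mod_cast this
        rwa [hz', ← mul_sub] at hm'
    have hirr : Irrational x := by
      have h5 : Irrational (Real.sqrt 5) := by
        simpa using Nat.Prime.irrational_sqrt (p := 5) (by norm_num)
      have := h5.intCast_mul (m := 5 * v * 8 ^ (N + 1)) (by positivity)
      rw [hx]
      simpa using this
    have hpos : 0 < |x - m| := abs_pos.mpr (sub_ne_zero.mpr (hirr.ne_int m))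
    obtain ⟨k, hk'⟩ := pow_unbounded_of_one_lt (1 / |x - m|) (by norm_num : (1 : ℝ) < 8)
    have := hk k
    rw [abs_mul, abs_of_pos (by positivity : (0 : ℝ) < 8 ^ k)] at this
    rw [div_lt_iff₀ hpos] at hk'
    linarith
  refine ⟨key, fun ht => ?_⟩
  have hev := ht.eventually (gt_mem_nhds (by norm_num : (0 : ℝ) < 1 / 16))
  obtain ⟨n, hn, hlt⟩ := ((Nat.frequently_atTop_iff_infinite.mpr key).and_eventually hev).exists
  exact absurd hlt (not_lt.mpr (le_ciInf fun m => (hn m).le))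
end

section
/- Let q ≥ 2 and let π be a permutation of {0,…,q−1}. Define the permutation π' of {0,…,2q−1} by π'(i) = π(i) + q for 0 ≤ i < q and π'(i) = i − q for q ≤ i < 2q, and consider the rotated odometer F_{π'} on [0,1) built from 2q intervals. Then for every x ∈ [0,1/2) one has F_{π'}(x) = (1/2)·F_π(2x). In particular, the half-interval [0,1/2) is F_{π'}-invariant, the first return map of F_{π'} to [0,1/2) has return time 1 at every point, and this return map is topologically conjugate to F_π on [0,1) via the scaling h(x) = 2x, i.e. h(F_{π'}(x)) = F_π(h(x)) for all x ∈ [0,1/2). -/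
theorem vnk_eq_aux (x : ℝ) (n : ℕ) (h1 : 1 - (2 : ℝ)⁻¹ ^ n ≤ x)
    (h2 : x < 1 - (2 : ℝ)⁻¹ ^ (n + 1)) : vnk x = x - 1 + 3 * (2 : ℝ)⁻¹ ^ (n + 1) := by
  classical
  have h : ∃ n : ℕ, x < 1 - (2 : ℝ)⁻¹ ^ n := ⟨_, h2⟩
  unfold vnk
  rw [dif_pos h]
  congr 3
  rw [Nat.find_eq_iff]
  refine ⟨h2, fun m hm => ?_⟩
  have : (2 : ℝ)⁻¹ ^ n ≤ (2 : ℝ)⁻¹ ^ m :=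
    pow_le_pow_of_le_one (by norm_num) (by norm_num) (by omega)
  linarith

theorem vnk_exists_aux (x : ℝ) (h0 : 0 ≤ x) (h1 : x < 1) :
    ∃ n : ℕ, 1 - (2 : ℝ)⁻¹ ^ n ≤ x ∧ x < 1 - (2 : ℝ)⁻¹ ^ (n + 1) := by
  classical
  have h : ∃ n : ℕ, x < 1 - (2 : ℝ)⁻¹ ^ n := by
    obtain ⟨n, hn⟩ := exists_pow_lt_of_lt_one (sub_pos.2 h1) (by norm_num : (2 : ℝ)⁻¹ < 1)
    exact ⟨n, by linarith⟩
  have hs := Nat.find_spec h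
  have hmin := fun m => Nat.find_min h (m := m)
  generalize Nat.find h = k at hs hmin
  cases k with
  | zero => simp at hs; linarith
  | succ n => exact ⟨n, not_lt.1 (hmin n (by omega)), hs⟩

theorem vnk_half_aux (t : ℝ) (h0 : 0 ≤ t) (h1 : t < 1) :
    vnk (1 / 2 + t / 2) = vnk t / 2 ∧ 0 ≤ vnk t ∧ vnk t < 1 := by
  obtain ⟨n, ha, hb⟩ := vnk_exists_aux t h0 h1
  have hp : (2 : ℝ)⁻¹ ^ n ≤ 1 := pow_le_one₀ (by norm_num) (by norm_num)
  have hp0 : 0 < (2 : ℝ)⁻¹ ^ n := by positivity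
  have e1 : (2 : ℝ)⁻¹ ^ (n + 1) = (2 : ℝ)⁻¹ ^ n / 2 := by rw [pow_succ]; ring
  have e2 : (2 : ℝ)⁻¹ ^ (n + 1 + 1) = (2 : ℝ)⁻¹ ^ n / 4 := by rw [pow_succ, pow_succ]; ring
  rw [vnk_eq_aux t n ha hb, vnk_eq_aux (1 / 2 + t / 2) (n + 1) (by rw [e1]; linarith)
    (by rw [e2]; linarith), e2]
  rw [e1] at hb ⊢
  refine ⟨by ring, by linarith, by linarith⟩

theorem rotPerm_eq_aux (q : ℕ) (hq : 0 < q) (π : Equiv.Perm (Fin q)) (x : ℝ) (i : Fin q)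
    (h1 : ((i : ℕ) : ℝ) ≤ x * q) (h2 : x * q < ((i : ℕ) : ℝ) + 1) :
    rotPerm q π x = x + (((π i : ℕ) : ℝ) - ((i : ℕ) : ℝ)) / q := by
  have hq' : (0 : ℝ) < q := by exact_mod_cast hq
  have h : ∃ i : Fin q, x ∈ Set.Ico (((i : ℕ) : ℝ) / q) ((((i : ℕ) : ℝ) + 1) / q) :=
    ⟨i, (div_le_iff₀ hq').2 h1, (lt_div_iff₀ hq').2 h2⟩
  have hc : h.choose = i := by
    obtain ⟨a, b⟩ := h.choose_spec
    generalize h.choose = j at a b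
    rw [div_le_iff₀ hq'] at a
    rw [lt_div_iff₀ hq'] at b
    have u : (j : ℕ) < (i : ℕ) + 1 := by exact_mod_cast a.trans_lt h2
    have v : (i : ℕ) < (j : ℕ) + 1 := by exact_mod_cast h1.trans_lt b
    ext
    omega
  unfold rotPerm
  rw [dif_pos h, hc]

theorem rotOdo_aux (q : ℕ) (hq : 2 ≤ q) (π : Equiv.Perm (Fin q))
    (π' : Equiv.Perm (Fin (2 * q)))
    (hπ' : ∀ i : Fin (2 * q), ((π' i : ℕ) =
      if h : (i : ℕ) < q then ((π ⟨(i : ℕ), h⟩ : Fin q) : ℕ) + q else (i : ℕ) - q))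
    (x : ℝ) (h0 : 0 ≤ x) (hx : x < 1 / 2) :
    rotOdo (2 * q) π' x = rotOdo q π (2 * x) / 2 ∧
      0 ≤ rotOdo q π (2 * x) ∧ rotOdo q π (2 * x) < 1 := by
  have hq' : (0 : ℝ) < q := by exact_mod_cast (by omega : 0 < q)
  have hy : 0 ≤ 2 * x * q := by positivity
  have hlt : ⌊2 * x * q⌋₊ < q := by
    rw [Nat.floor_lt hy]
    nlinarith
  have f1 := Nat.floor_le hy
  have f2 := Nat.lt_floor_add_one (2 * x * q)
  generalize ⌊2 * x * q⌋₊ = k at hlt f1 f2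
  have r1 := rotPerm_eq_aux q (by omega) π (2 * x) ⟨k, hlt⟩ f1 f2
  have r2 := rotPerm_eq_aux (2 * q) (by omega) π' x ⟨k, by omega⟩
    (by push_cast; linarith) (by push_cast; linarith)
  rw [hπ' ⟨k, by omega⟩, dif_pos hlt] at r2
  have hm : ((π ⟨k, hlt⟩ : ℕ) : ℝ) + 1 ≤ q := by exact_mod_cast (π ⟨k, hlt⟩).2
  have hm0 : (0 : ℝ) ≤ ((π ⟨k, hlt⟩ : ℕ) : ℝ) := Nat.cast_nonneg _
  simp only at r1 r2
  generalize ((π ⟨k, hlt⟩ : Fin q) : ℕ) = m at *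
  have e : rotPerm (2 * q) π' x = 1 / 2 + rotPerm q π (2 * x) / 2 := by
    rw [r1, r2]
    push_cast
    field_simp
    ring
  have e' : rotPerm q π (2 * x) = (2 * x * q + (m - k)) / q := by
    rw [r1]
    field_simp
  unfold rotOdo
  rw [e]
  apply vnk_half_aux
  · rw [e']
    apply div_nonneg _ hq'.le
    linarith
  · rw [e', div_lt_one hq']
    linarith

/-- if `π'` is the permutation of `{0,…,2q-1}` with `π' i = π i + q` for
`i < q` and `π' i = i - q` for `q ≤ i < 2q`, then on `[0,1/2)` the rotated odometer
`F_{π'}` (built from `2q` intervals) satisfies `F_{π'} x = (1/2)·F_π (2x)`.  In particular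
`[0,1/2)` is `F_{π'}`-invariant (the first return time to `[0,1/2)` is `1` everywhere), and
the first return map is conjugate to `F_π` via `h x = 2x`: `h (F_{π'} x) = F_π (h x)`. -/
theorem rotOdo_doubling (q : ℕ) (hq : 2 ≤ q) (π : Equiv.Perm (Fin q))
    (π' : Equiv.Perm (Fin (2 * q)))
    (hπ' : ∀ i : Fin (2 * q), ((π' i : ℕ) =
      if h : (i : ℕ) < q then ((π ⟨(i : ℕ), h⟩ : Fin q) : ℕ) + q else (i : ℕ) - q)) :
    (∀ x ∈ Set.Ico (0 : ℝ) (1 / 2),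
        rotOdo (2 * q) π' x = (1 / 2) * rotOdo q π (2 * x)) ∧
    Set.MapsTo (rotOdo (2 * q) π') (Set.Ico (0 : ℝ) (1 / 2)) (Set.Ico (0 : ℝ) (1 / 2)) ∧
    (∀ x ∈ Set.Ico (0 : ℝ) (1 / 2),
        2 * rotOdo (2 * q) π' x = rotOdo q π (2 * x)) := by
  have key := rotOdo_aux q hq π π' hπ'
  refine ⟨fun x hx => ?_, fun x hx => ?_, fun x hx => ?_⟩
  · rw [(key x hx.1 hx.2).1]
    ring
  · obtain ⟨a, b, c⟩ := key x hx.1 hx.2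
    rw [a]
    exact ⟨by linarith, by linarith⟩
  · rw [(key x hx.1 hx.2).1]
    ring
end
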